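/- arXiv:1812.06793 — 6 statements merged into one kernel-verified Lean document; each statement's English description precedes it below -/
import Mathlib

section
/- Let φ(λ) = a + bλ + ∫_{(0,∞)} (1 − e^{−λs}) ν(ds) be a Bernstein function, extended by the same formula to complex arguments with positive real part. If −φ'' ∈ WLSC(α−2, c, x₀) for some c ∈ (0,1], x₀ ≥ 0 and α > 0, then there exists C > 0 such that for all w > x₀ and all λ ∈ ℝ: Re(φ(w + iλ) − φ(w)) ≥ C · λ² · (−φ''(max{|λ|, w})). -/
open MeasureTheory Real Set

noncomputable section

/-- Weak lower scaling property at infinity. -/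
def WLSC (f : ℝ → ℝ) (θ c x₀ : ℝ) : Prop :=
  ∀ lam : ℝ, 1 ≤ lam → ∀ x : ℝ, x₀ < x → c * lam ^ θ * f x ≤ f (lam * x)

/-- The extension of the Bernstein function
`φ(λ) = a + bλ + ∫_{(0,∞)} (1 − e^{−λs}) ν(ds)` to complex arguments. -/
def phiC (a b : ℝ) (ν : Measure ℝ) (z : ℂ) : ℂ :=
  (a : ℂ) + (b : ℂ) * z + ∫ s in Ioi (0:ℝ), (1 - Complex.exp (-z * (s : ℂ))) ∂ν

lemma bern_aux_bound1 {x s : ℝ} (hx : 0 < x) (hs : 0 < s) :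
    s * Real.exp (-x * s) ≤ (1 + 1 / x) * min 1 s := by
  have h1 : Real.exp (-x * s) ≤ 1 := Real.exp_le_one_iff.2 (by nlinarith [mul_pos hx hs])
  have h2 : x * s * Real.exp (-x * s) ≤ 1 := by
    have h3 : x * s ≤ Real.exp (x * s) := by linarith [Real.add_one_le_exp (x * s)]
    calc x * s * Real.exp (-x * s) ≤ Real.exp (x * s) * Real.exp (-x * s) := by gcongr
      _ = 1 := by rw [← Real.exp_add]; simp
  have h4 : s * Real.exp (-x * s) ≤ 1 / x := by
    rw [le_div_iff₀ hx]; linarith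
  have h5 : s * Real.exp (-x * s) ≤ s := by nlinarith
  have hx' : 0 < 1 / x := by positivity
  rcases le_total 1 s with h | h
  · rw [min_eq_left h]; linarith
  · rw [min_eq_right h]; nlinarith [mul_pos hx' hs]

lemma bern_aux_bound2 {x s : ℝ} (hx : 0 < x) (hs : 0 < s) :
    s ^ 2 * Real.exp (-x * s) ≤ (2 / x * (1 + 2 / x)) * min 1 s := by
  have h1 := bern_aux_bound1 (half_pos hx) hs
  have h2 : s * Real.exp (-(x / 2) * s) ≤ 2 / x := by
    have h3 : x / 2 * s ≤ Real.exp (x / 2 * s) := by linarith [Real.add_one_le_exp (x / 2 * s)]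
    have : x / 2 * s * Real.exp (-(x / 2) * s) ≤ 1 := by
      calc x / 2 * s * Real.exp (-(x / 2) * s)
          ≤ Real.exp (x / 2 * s) * Real.exp (-(x / 2) * s) := by gcongr
        _ = 1 := by rw [← Real.exp_add]; simp
    rw [le_div_iff₀ hx]; linarith
  have e : s ^ 2 * Real.exp (-x * s)
      = (s * Real.exp (-(x / 2) * s)) * (s * Real.exp (-(x / 2) * s)) := by
    have : -x * s = -(x / 2) * s + -(x / 2) * s := by ring
    rw [this, Real.exp_add]; ring
  have e2 : 1 / (x / 2) = 2 / x := by field_simp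
  rw [e2] at h1
  rw [e, mul_assoc (2 / x)]
  exact mul_le_mul h2 h1 (by positivity) (by positivity)

lemma bern_aux_cbound {z : ℂ} {s : ℝ} (hz : 0 < z.re) (hs : 0 < s) :
    ‖1 - Complex.exp (-z * (s : ℂ))‖ ≤ (2 + 2 * ‖z‖) * min 1 s := by
  have hn : ‖-z * (s : ℂ)‖ = ‖z‖ * s := by simp [abs_of_pos hs]
  have h2 : ‖1 - Complex.exp (-z * (s : ℂ))‖ ≤ 2 := by
    have : ‖Complex.exp (-z * (s : ℂ))‖ ≤ 1 := by
      rw [Complex.norm_exp, Real.exp_le_one_iff]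
      simp; positivity
    calc _ ≤ ‖(1:ℂ)‖ + ‖Complex.exp (-z * (s : ℂ))‖ := norm_sub_le _ _
      _ ≤ 2 := by rw [norm_one]; linarith
  have h3 : ‖1 - Complex.exp (-z * (s : ℂ))‖ ≤ 2 * (‖z‖ * s) := by
    rcases le_total (‖z‖ * s) 1 with h | h
    · rw [norm_sub_rev, ← hn]
      exact Complex.norm_exp_sub_one_le (by rw [hn]; exact h)
    · linarith
  have hz0 := norm_nonneg z
  rcases le_total 1 s with h | h
  · rw [min_eq_left h]; linarith
  · rw [min_eq_right h]; nlinarith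

section
variable {μ : Measure ℝ}

lemma bern_aux_int_of_bound {E : Type*} [NormedAddCommGroup E] {f : ℝ → E} {K : ℝ}
    (hm : Integrable (fun s : ℝ => min 1 s) μ) (hpos : ∀ᵐ s ∂μ, 0 < s)
    (hf : AEStronglyMeasurable f μ) (hb : ∀ s, 0 < s → ‖f s‖ ≤ K * min 1 s) :
    Integrable f μ :=
  (hm.const_mul K).mono' hf (hpos.mono hb)

lemma bern_aux_int1 (hm : Integrable (fun s : ℝ => min 1 s) μ) (hpos : ∀ᵐ s ∂μ, 0 < s)
    {x : ℝ} (hx : 0 < x) : Integrable (fun s => s * Real.exp (-x * s)) μ :=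
  bern_aux_int_of_bound hm hpos (by fun_prop) fun s hs => by
    rw [Real.norm_of_nonneg (by positivity)]; exact bern_aux_bound1 hx hs

lemma bern_aux_int2 (hm : Integrable (fun s : ℝ => min 1 s) μ) (hpos : ∀ᵐ s ∂μ, 0 < s)
    {x : ℝ} (hx : 0 < x) : Integrable (fun s => s ^ 2 * Real.exp (-x * s)) μ :=
  bern_aux_int_of_bound hm hpos (by fun_prop) fun s hs => by
    rw [Real.norm_of_nonneg (by positivity)]; exact bern_aux_bound2 hx hs

lemma bern_aux_intc (hm : Integrable (fun s : ℝ => min 1 s) μ) (hpos : ∀ᵐ s ∂μ, 0 < s)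
    {z : ℂ} (hz : 0 < z.re) : Integrable (fun s : ℝ => 1 - Complex.exp (-z * (s : ℂ))) μ :=
  bern_aux_int_of_bound hm hpos (Continuous.aestronglyMeasurable (by fun_prop))
    fun s hs => bern_aux_cbound hz hs

lemma bern_aux_int0 (hm : Integrable (fun s : ℝ => min 1 s) μ) (hpos : ∀ᵐ s ∂μ, 0 < s)
    {x : ℝ} (hx : 0 < x) : Integrable (fun s : ℝ => 1 - Real.exp (-x * s)) μ := by
  have := (bern_aux_intc hm hpos (z := (x : ℂ)) (by simpa using hx)).re
  refine this.congr (Filter.Eventually.of_forall fun s => ?_)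
  simp [Complex.exp_re]

lemma bern_aux_deriv1 (hm : Integrable (fun s : ℝ => min 1 s) μ) (hpos : ∀ᵐ s ∂μ, 0 < s)
    {x : ℝ} (hx : 0 < x) :
    HasDerivAt (fun y => ∫ s, (1 - Real.exp (-y * s)) ∂μ)
      (∫ s, s * Real.exp (-x * s) ∂μ) x := by
  refine (hasDerivAt_integral_of_dominated_loc_of_deriv_le
    (F' := fun y s => s * Real.exp (-y * s))
    (bound := fun s => s * Real.exp (-(x / 2) * s))
    (Ioi_mem_nhds (half_lt_self hx)) (Filter.Eventually.of_forall fun y => by fun_prop)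
    (bern_aux_int0 hm hpos hx) (by fun_prop) ?_ (bern_aux_int1 hm hpos (half_pos hx)) ?_).2
  · filter_upwards [hpos] with s hs y hy
    rw [Real.norm_of_nonneg (by positivity)]
    have : x / 2 < y := hy
    gcongr
  · refine Filter.Eventually.of_forall fun s y _ => ?_
    have h := (((hasDerivAt_id y).neg.mul_const s).exp).const_sub 1
    refine h.congr_deriv ?_
    simp; ring

lemma bern_aux_deriv2 (hm : Integrable (fun s : ℝ => min 1 s) μ) (hpos : ∀ᵐ s ∂μ, 0 < s)
    {x : ℝ} (hx : 0 < x) :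
    HasDerivAt (fun y => ∫ s, s * Real.exp (-y * s) ∂μ)
      (∫ s, -(s ^ 2 * Real.exp (-x * s)) ∂μ) x := by
  refine (hasDerivAt_integral_of_dominated_loc_of_deriv_le
    (F' := fun y s => -(s ^ 2 * Real.exp (-y * s)))
    (bound := fun s => s ^ 2 * Real.exp (-(x / 2) * s))
    (Ioi_mem_nhds (half_lt_self hx)) (Filter.Eventually.of_forall fun y => by fun_prop)
    (bern_aux_int1 hm hpos hx) (by fun_prop) ?_ (bern_aux_int2 hm hpos (half_pos hx)) ?_).2
  · filter_upwards [hpos] with s hs y hy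
    rw [norm_neg, Real.norm_of_nonneg (by positivity)]
    have : x / 2 < y := hy
    gcongr
  · refine Filter.Eventually.of_forall fun s y _ => ?_
    have h := (((hasDerivAt_id y).neg.mul_const s).exp).const_mul s
    refine h.congr_deriv ?_
    simp; ring

lemma bern_aux_phi'' (hm : Integrable (fun s : ℝ => min 1 s) μ) (hpos : ∀ᵐ s ∂μ, 0 < s)
    {φ : ℝ → ℝ} {a b : ℝ}
    (hφ : ∀ x : ℝ, 0 < x → φ x = a + b * x + ∫ s, (1 - Real.exp (-x * s)) ∂μ)
    {x : ℝ} (hx : 0 < x) :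
    -(deriv (deriv φ) x) = ∫ s, s ^ 2 * Real.exp (-x * s) ∂μ := by
  have h1 : ∀ y : ℝ, 0 < y → deriv φ y = b + ∫ s, s * Real.exp (-y * s) ∂μ := by
    intro y hy
    have h := ((((hasDerivAt_id y).const_mul b).const_add a).add (bern_aux_deriv1 hm hpos hy))
    have h' : HasDerivAt φ _ y := h.congr_of_eventuallyEq (by
      filter_upwards [Ioi_mem_nhds hy] with t ht
      simpa using hφ t ht)
    rw [h'.deriv]; simp
  have h' : HasDerivAt (deriv φ) _ x :=
    ((bern_aux_deriv2 hm hpos hx).const_add b).congr_of_eventuallyEq (by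
      filter_upwards [Ioi_mem_nhds hx] with t ht
      simpa using h1 t ht)
  rw [h'.deriv, integral_neg, neg_neg]

lemma bern_aux_pointwise {w lam L s : ℝ} (hw : 0 < w) (hL : 1 ≤ L) (hs : 0 < s) :
    2 / π ^ 2 * lam ^ 2 * (s ^ 2 * Real.exp (-(L * max |lam| w) * s)
      - Real.exp (-(L - 1)) * (s ^ 2 * Real.exp (-(max |lam| w) * s)))
      ≤ Real.exp (-w * s) * (1 - Real.cos (lam * s)) := by
  set m := max |lam| w with hmdef
  have hwm : w ≤ m := le_max_right _ _
  have hlm : |lam| ≤ m := le_max_left _ _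
  have hm0 : 0 < m := hw.trans_le hwm
  have hcos : 0 ≤ 1 - Real.cos (lam * s) := by linarith [Real.cos_le_one (lam * s)]
  rcases le_total (m * s) 1 with h | h
  · have habs : |lam * s| ≤ π := by
      rw [abs_mul, abs_of_pos hs]
      have : |lam| * s ≤ m * s := by gcongr
      linarith [Real.pi_gt_three]
    have h1 := Real.cos_le_one_sub_mul_cos_sq habs
    have h2 : Real.exp (-(L * m) * s) ≤ Real.exp (-w * s) := by
      apply Real.exp_le_exp.2
      have : w ≤ L * m := by nlinarith
      nlinarith
    have h3 : 0 ≤ Real.exp (-(L - 1)) * (s ^ 2 * Real.exp (-m * s)) := by positivity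
    calc _ ≤ 2 / π ^ 2 * lam ^ 2 * (s ^ 2 * Real.exp (-w * s)) := by
          gcongr
          have : s ^ 2 * Real.exp (-(L * m) * s) ≤ s ^ 2 * Real.exp (-w * s) := by gcongr
          linarith
      _ = Real.exp (-w * s) * (2 / π ^ 2 * (lam * s) ^ 2) := by ring
      _ ≤ _ := by gcongr; linarith
  · have h2 : Real.exp (-(L * m) * s) ≤ Real.exp (-(L - 1)) * Real.exp (-m * s) := by
      rw [← Real.exp_add]
      apply Real.exp_le_exp.2
      nlinarith
    have h3 : s ^ 2 * Real.exp (-(L * m) * s)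
        - Real.exp (-(L - 1)) * (s ^ 2 * Real.exp (-m * s)) ≤ 0 := by
      nlinarith [mul_le_mul_of_nonneg_left h2 (sq_nonneg s)]
    have h4 : 0 ≤ 2 / π ^ 2 * lam ^ 2 := by positivity
    have h5 : 0 ≤ Real.exp (-w * s) * (1 - Real.cos (lam * s)) := by positivity
    nlinarith [mul_nonneg h4 (neg_nonneg.2 h3)]

lemma bern_aux_exists (α c : ℝ) (hc : 0 < c) :
    ∃ L : ℝ, 1 ≤ L ∧ Real.exp (-(L - 1)) < c * L ^ (α - 2) := by
  have h := tendsto_rpow_mul_exp_neg_mul_atTop_nhds_zero (2 - α) 1 one_pos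
  have hc' : 0 < c / Real.exp 1 := by positivity
  obtain ⟨L, h1, h2⟩ := ((h.eventually (gt_mem_nhds hc')).and
    (Filter.eventually_ge_atTop 1)).exists
  refine ⟨L, h2, ?_⟩
  have hL : 0 < L := by linarith
  rw [lt_div_iff₀ (Real.exp_pos 1)] at h1
  have hp : 0 < L ^ (α - 2) := Real.rpow_pos_of_pos hL _
  have e1 : L ^ (α - 2) * L ^ (2 - α) = 1 := by
    rw [← Real.rpow_add hL]; simp
  have e2 : Real.exp (-(L - 1)) = Real.exp (-1 * L) * Real.exp 1 := by
    rw [← Real.exp_add]; congr 1; ring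
  rw [e2]
  calc Real.exp (-1 * L) * Real.exp 1
      = L ^ (α - 2) * L ^ (2 - α) * (Real.exp (-1 * L) * Real.exp 1) := by rw [e1, one_mul]
    _ = L ^ (α - 2) * (L ^ (2 - α) * Real.exp (-1 * L) * Real.exp 1) := by ring
    _ < L ^ (α - 2) * c := by gcongr
    _ = _ := by ring

end

/-- Lower estimate on the real part of the holomorphic extension:
`Re(φ(w+iλ) − φ(w)) ≥ C λ² (−φ''(max{|λ|, w}))` for `w > x₀`, `λ ∈ ℝ`. -/
theorem bernstein_real_part_lower_estimate
    (φ : ℝ → ℝ) (a b : ℝ) (ν : Measure ℝ) (α c x₀ : ℝ)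
    (ha : 0 ≤ a) (hb : 0 ≤ b)
    (hνfin : ∫⁻ s in Ioi (0:ℝ), ENNReal.ofReal (min 1 s) ∂ν ≠ ⊤)
    (hφ : ∀ x : ℝ, 0 < x →
      φ x = a + b * x + ∫ s in Ioi (0:ℝ), (1 - Real.exp (-x * s)) ∂ν)
    (hα : 0 < α) (hc : 0 < c) (hc1 : c ≤ 1) (hx₀ : 0 ≤ x₀)
    (hscal : WLSC (fun x => -(deriv (deriv φ) x)) (α - 2) c x₀) :
    ∃ C : ℝ, 0 < C ∧
      ∀ w : ℝ, x₀ < w → ∀ lam : ℝ,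
        C * lam ^ 2 * -(deriv (deriv φ) (max |lam| w)) ≤
          (phiC a b ν ((w : ℂ) + (lam : ℂ) * Complex.I) - phiC a b ν (w : ℂ)).re := by
  set μ := ν.restrict (Ioi (0:ℝ)) with hμ
  have hpos : ∀ᵐ s ∂μ, 0 < s := ae_restrict_mem measurableSet_Ioi
  have hm : Integrable (fun s : ℝ => min 1 s) μ := by
    refine ⟨by fun_prop, ?_⟩
    rw [hasFiniteIntegral_iff_ofReal (hpos.mono fun s hs => by
      have : (0:ℝ) ≤ min 1 s := le_min zero_le_one hs.le
      simpa using this)]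
    exact lt_top_iff_ne_top.2 hνfin
  obtain ⟨L, hL, hLc⟩ := bern_aux_exists α c hc
  refine ⟨2 / π ^ 2 * (c * L ^ (α - 2) - Real.exp (-(L - 1))), ?_, ?_⟩
  · have : 0 < c * L ^ (α - 2) - Real.exp (-(L - 1)) := by linarith
    positivity
  intro w hw lam
  have hw0 : 0 < w := hx₀.trans_lt hw
  have hm0 : 0 < max |lam| w := hw0.trans_le (le_max_right _ _)
  have hLm : 0 < L * max |lam| w := by positivity
  have hs := hscal L hL (max |lam| w) (hw.trans_le (le_max_right _ _))
  simp only at hs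
  rw [bern_aux_phi'' hm hpos hφ hm0, bern_aux_phi'' hm hpos hφ hLm] at hs
  rw [bern_aux_phi'' hm hpos hφ hm0]
  have i1 := bern_aux_intc hm hpos (z := (w : ℂ) + (lam : ℂ) * Complex.I) (by simpa using hw0)
  have i2 := bern_aux_intc hm hpos (z := (w : ℂ)) (by simpa using hw0)
  have i3 := i1.sub i2
  have hre : (phiC a b ν ((w : ℂ) + (lam : ℂ) * Complex.I) - phiC a b ν (w : ℂ)).re
      = ∫ s, Real.exp (-w * s) * (1 - Real.cos (lam * s)) ∂μ := by
    have e : phiC a b ν ((w : ℂ) + (lam : ℂ) * Complex.I) - phiC a b ν (w : ℂ)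
      = (b : ℂ) * ((lam : ℂ) * Complex.I)
        + ∫ s, ((1 - Complex.exp (-((w : ℂ) + (lam : ℂ) * Complex.I) * (s : ℂ)))
          - (1 - Complex.exp (-(w : ℂ) * (s : ℂ)))) ∂μ := by
      rw [integral_sub i1 i2]; unfold phiC; ring
    rw [e, Complex.add_re]
    have e2 := integral_re (𝕜 := ℂ) i3
    simp only [RCLike.re_to_complex, Pi.sub_apply] at e2
    rw [← e2]
    simp only [Complex.mul_re, Complex.ofReal_re, Complex.ofReal_im, Complex.I_re, Complex.I_im,
      mul_zero, zero_mul, sub_zero, zero_add]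
    simp [Complex.exp_re, Complex.exp_im]
    refine integral_congr_ae (Filter.Eventually.of_forall fun s => ?_)
    simp; ring
  have i4 : Integrable (fun s => Real.exp (-w * s) * (1 - Real.cos (lam * s))) μ := by
    refine i3.re.congr (Filter.Eventually.of_forall fun s => ?_)
    simp [Complex.exp_re, Complex.exp_im]; ring
  have j1 := bern_aux_int2 hm hpos hLm
  have j2 := bern_aux_int2 hm hpos hm0
  rw [hre]
  have key := integral_mono_ae ((j1.sub (j2.const_mul (Real.exp (-(L - 1))))).const_mul
    (2 / π ^ 2 * lam ^ 2)) i4 (hpos.mono fun s hs' =>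
      bern_aux_pointwise (w := w) (lam := lam) (L := L) hw0 hL hs')
  rw [integral_const_mul] at key
  simp only [Pi.sub_apply] at key
  rw [integral_sub j1 (j2.const_mul _), integral_const_mul] at key
  refine le_trans ?_ key
  have h4 : 0 ≤ 2 / π ^ 2 * lam ^ 2 := by positivity
  nlinarith [mul_le_mul_of_nonneg_left hs h4]
end
end

section
/- Let φ be a Bernstein function with representation φ(λ) = a + bλ + ∫_{(0,∞)} (1 − e^{−λs}) μ(ds). Suppose −φ'' ∈ WLSC(α−2, c, x₀) for some c ∈ (0,1], x₀ ≥ 0 and α > 0. Then there is a constant C > 0, depending only on α and c, such that for all x > x₀: C·(−φ''(x)) ≤ ∫_{(0,1/x)} s² μ(ds). -/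
open MeasureTheory Real Set

noncomputable section

lemma aux_mul_exp_le (d s : ℝ) (hd : 0 < d) : s * Real.exp (-d * s) ≤ 1 / d := by
  rw [le_div_iff₀ hd, neg_mul, Real.exp_neg, mul_right_comm,
    ← div_eq_mul_inv, div_le_one (Real.exp_pos _)]
  nlinarith [Real.add_one_le_exp (d * s)]

lemma aux_bound1 (d s : ℝ) (hd : 0 < d) (hs : 0 < s) :
    s * Real.exp (-d * s) ≤ (1 + 1 / d) * min 1 s := by
  have h1 := aux_mul_exp_le d s hd
  have h2 : Real.exp (-d * s) ≤ 1 := Real.exp_le_one_iff.2 (by nlinarith)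
  have h3 : 0 < 1 / d := by positivity
  rcases le_total 1 s with h | h
  · rw [min_eq_left h]; linarith
  · rw [min_eq_right h]; nlinarith

lemma aux_bound2 (d s : ℝ) (hd : 0 < d) (hs : 0 < s) :
    s ^ 2 * Real.exp (-d * s) ≤ (1 / (d / 2) * (1 + 1 / (d / 2))) * min 1 s := by
  have h1 := aux_mul_exp_le (d / 2) s (by positivity)
  have h2 := aux_bound1 (d / 2) s (by positivity) hs
  have e : s ^ 2 * Real.exp (-d * s)
      = (s * Real.exp (-(d / 2) * s)) * (s * Real.exp (-(d / 2) * s)) := by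
    have : -d * s = -(d / 2) * s + -(d / 2) * s := by ring
    rw [this, Real.exp_add]; ring
  rw [e, mul_assoc (1 / (d / 2))]
  exact mul_le_mul h1 h2 (by positivity) (by positivity)

lemma aux_int_min (μ : Measure ℝ)
    (h : ∫⁻ s in Ioi (0:ℝ), ENNReal.ofReal (min 1 s) ∂μ ≠ ⊤) :
    Integrable (fun s : ℝ => min 1 s) (μ.restrict (Ioi 0)) := by
  refine ⟨(by fun_prop : Measurable fun s : ℝ => min 1 s).aestronglyMeasurable, ?_⟩
  rw [hasFiniteIntegral_iff_ofReal]
  · exact lt_top_iff_ne_top.2 h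
  · filter_upwards [ae_restrict_mem measurableSet_Ioi] with s hs
    exact le_min zero_le_one (le_of_lt hs)

lemma aux_int_of_le (μ : Measure ℝ)
    (h : ∫⁻ s in Ioi (0:ℝ), ENNReal.ofReal (min 1 s) ∂μ ≠ ⊤) (f : ℝ → ℝ) (hf : Measurable f)
    (K : ℝ) (hK : ∀ s, 0 < s → ‖f s‖ ≤ K * min 1 s) :
    Integrable f (μ.restrict (Ioi 0)) := by
  refine ((aux_int_min μ h).const_mul K).mono' hf.aestronglyMeasurable ?_
  filter_upwards [ae_restrict_mem measurableSet_Ioi] with s hs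
  exact hK s hs

lemma aux_int0 (μ : Measure ℝ)
    (h : ∫⁻ s in Ioi (0:ℝ), ENNReal.ofReal (min 1 s) ∂μ ≠ ⊤) (x : ℝ) (hx : 0 < x) :
    Integrable (fun s : ℝ => 1 - Real.exp (-x * s)) (μ.restrict (Ioi 0)) := by
  refine aux_int_of_le μ h _ (by fun_prop) (1 + x) fun s hs => ?_
  have h2 : Real.exp (-x * s) ≤ 1 := Real.exp_le_one_iff.2 (by nlinarith)
  have h3 := Real.add_one_le_exp (-x * s)
  have h4 := Real.exp_pos (-x * s)
  rw [Real.norm_of_nonneg (by linarith)]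
  rcases le_total 1 s with h | h
  · rw [min_eq_left h]; linarith
  · rw [min_eq_right h]; nlinarith

lemma aux_int1 (μ : Measure ℝ)
    (h : ∫⁻ s in Ioi (0:ℝ), ENNReal.ofReal (min 1 s) ∂μ ≠ ⊤) (x : ℝ) (hx : 0 < x) :
    Integrable (fun s : ℝ => s * Real.exp (-x * s)) (μ.restrict (Ioi 0)) := by
  refine aux_int_of_le μ h _ (by fun_prop) (1 + 1 / x) fun s hs => ?_
  rw [Real.norm_of_nonneg (by positivity)]
  exact aux_bound1 x s hx hs

lemma aux_int2 (μ : Measure ℝ)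
    (h : ∫⁻ s in Ioi (0:ℝ), ENNReal.ofReal (min 1 s) ∂μ ≠ ⊤) (x : ℝ) (hx : 0 < x) :
    Integrable (fun s : ℝ => s ^ 2 * Real.exp (-x * s)) (μ.restrict (Ioi 0)) := by
  refine aux_int_of_le μ h _ (by fun_prop) (1 / (x / 2) * (1 + 1 / (x / 2))) fun s hs => ?_
  rw [Real.norm_of_nonneg (by positivity)]
  exact aux_bound2 x s hx hs

lemma aux_hasDeriv_exp (x s : ℝ) :
    HasDerivAt (fun y : ℝ => Real.exp (-y * s)) (-(s * Real.exp (-x * s))) x := by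
  have := (((hasDerivAt_id x).neg).mul_const s).exp
  refine this.congr_deriv ?_
  simp; ring

lemma aux_deriv1 (μ : Measure ℝ)
    (h : ∫⁻ s in Ioi (0:ℝ), ENNReal.ofReal (min 1 s) ∂μ ≠ ⊤) (x : ℝ) (hx : 0 < x) :
    HasDerivAt (fun y => ∫ s in Ioi (0:ℝ), (1 - Real.exp (-y * s)) ∂μ)
      (∫ s in Ioi (0:ℝ), s * Real.exp (-x * s) ∂μ) x := by
  refine (hasDerivAt_integral_of_dominated_loc_of_deriv_le (s := Ioi (x / 2))
    (bound := fun s => s * Real.exp (-(x / 2) * s))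
    (F' := fun y s => s * Real.exp (-y * s)) (Ioi_mem_nhds (by linarith)) ?_
    (aux_int0 μ h x hx) ?_ ?_ (aux_int1 μ h (x / 2) (by positivity)) ?_).2
  · exact Filter.Eventually.of_forall fun y =>
      (by fun_prop : Measurable fun s : ℝ => 1 - Real.exp (-y * s)).aestronglyMeasurable
  · exact (by fun_prop : Measurable fun s : ℝ => s * Real.exp (-x * s)).aestronglyMeasurable
  · filter_upwards [ae_restrict_mem measurableSet_Ioi] with s hs y hy
    have hs : 0 < s := hs
    have hy : x / 2 < y := hy
    rw [Real.norm_of_nonneg (by positivity)]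
    have : Real.exp (-y * s) ≤ Real.exp (-(x / 2) * s) := Real.exp_le_exp.2 (by nlinarith)
    gcongr
  · refine Filter.Eventually.of_forall fun s y _ => ?_
    simpa using (aux_hasDeriv_exp y s).const_sub 1

lemma aux_deriv2 (μ : Measure ℝ)
    (h : ∫⁻ s in Ioi (0:ℝ), ENNReal.ofReal (min 1 s) ∂μ ≠ ⊤) (x : ℝ) (hx : 0 < x) :
    HasDerivAt (fun y => ∫ s in Ioi (0:ℝ), s * Real.exp (-y * s) ∂μ)
      (∫ s in Ioi (0:ℝ), -(s ^ 2 * Real.exp (-x * s)) ∂μ) x := by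
  refine (hasDerivAt_integral_of_dominated_loc_of_deriv_le (s := Ioi (x / 2))
    (bound := fun s => s ^ 2 * Real.exp (-(x / 2) * s))
    (F' := fun y s => -(s ^ 2 * Real.exp (-y * s))) (Ioi_mem_nhds (by linarith)) ?_
    (aux_int1 μ h x hx) ?_ ?_ (aux_int2 μ h (x / 2) (by positivity)) ?_).2
  · exact Filter.Eventually.of_forall fun y =>
      (by fun_prop : Measurable fun s : ℝ => s * Real.exp (-y * s)).aestronglyMeasurable
  · exact (by fun_prop :
      Measurable fun s : ℝ => -(s ^ 2 * Real.exp (-x * s))).aestronglyMeasurable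
  · filter_upwards [ae_restrict_mem measurableSet_Ioi] with s hs y hy
    have hs : 0 < s := hs
    have hy : x / 2 < y := hy
    rw [norm_neg, Real.norm_of_nonneg (by positivity)]
    have : Real.exp (-y * s) ≤ Real.exp (-(x / 2) * s) := Real.exp_le_exp.2 (by nlinarith)
    gcongr
  · refine Filter.Eventually.of_forall fun s y _ => ?_
    refine ((aux_hasDeriv_exp y s).const_mul s).congr_deriv ?_
    ring

lemma aux_second (φ : ℝ → ℝ) (a b : ℝ) (μ : Measure ℝ)
    (h : ∫⁻ s in Ioi (0:ℝ), ENNReal.ofReal (min 1 s) ∂μ ≠ ⊤)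
    (hφ : ∀ x : ℝ, 0 < x →
          φ x = a + b * x + ∫ s in Ioi (0:ℝ), (1 - Real.exp (-x * s)) ∂μ)
    (x : ℝ) (hx : 0 < x) :
    -(deriv (deriv φ) x) = ∫ s in Ioi (0:ℝ), s ^ 2 * Real.exp (-x * s) ∂μ := by
  have h1 : ∀ y : ℝ, 0 < y →
      deriv φ y = b + ∫ s in Ioi (0:ℝ), s * Real.exp (-y * s) ∂μ := by
    intro y hy
    have e : φ =ᶠ[nhds y]
        fun y => a + b * y + ∫ s in Ioi (0:ℝ), (1 - Real.exp (-y * s)) ∂μ := by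
      filter_upwards [Ioi_mem_nhds hy] with z hz using hφ z hz
    rw [e.deriv_eq]
    have := ((((hasDerivAt_id y).const_mul b).const_add a).add (aux_deriv1 μ h y hy)).deriv
    refine Eq.trans this ?_
    simp
  have e : deriv φ =ᶠ[nhds x]
      fun y => b + ∫ s in Ioi (0:ℝ), s * Real.exp (-y * s) ∂μ := by
    filter_upwards [Ioi_mem_nhds hx] with z hz using h1 z hz
  rw [e.deriv_eq, ((aux_deriv2 μ h x hx).const_add b).deriv, integral_neg, neg_neg]

lemma aux_choice (α c : ℝ) (hc : 0 < c) :
    ∃ l : ℝ, 1 ≤ l ∧ Real.exp (-(l - 1)) < c * l ^ (α - 2) := by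
  have t := tendsto_rpow_mul_exp_neg_mul_atTop_nhds_zero (2 - α) 1 one_pos
  have hp : 0 < c * Real.exp (-1) := by positivity
  obtain ⟨l, h1, h2⟩ := ((t.eventually_lt_const hp).and (Filter.eventually_ge_atTop 1)).exists
  refine ⟨l, h2, ?_⟩
  have hl : 0 < l := by linarith
  have e1 : Real.exp (-(l - 1)) = Real.exp (-1 * l) * Real.exp 1 := by
    rw [← Real.exp_add]; ring_nf
  have e2 : l ^ (α - 2) * l ^ (2 - α) = 1 := by
    rw [← Real.rpow_add hl]; simp
  have e3 : Real.exp (-1) * Real.exp 1 = 1 := by rw [← Real.exp_add]; simp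
  have hq : 0 < l ^ (α - 2) * Real.exp 1 := by positivity
  have := mul_lt_mul_of_pos_left h1 hq
  calc _ = l ^ (α - 2) * Real.exp 1 * (l ^ (2 - α) * Real.exp (-1 * l)) := by
        rw [e1]; linear_combination (-(Real.exp (-1 * l) * Real.exp 1)) * e2
    _ < _ := this
    _ = _ := by linear_combination (c * l ^ (α - 2)) * e3

/-- If `−φ'' ∈ WLSC(α−2, c, x₀)`, then there is a constant `C > 0`
depending only on `α` and `c` such that `C(−φ''(x)) ≤ ∫_{(0,1/x)} s² μ(ds)` for all
`x > x₀`. -/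
theorem bernstein_second_derivative_truncated_moment_bound
    (α c : ℝ) (hα : 0 < α) (hc : 0 < c) (hc1 : c ≤ 1) :
    ∃ C : ℝ, 0 < C ∧
      ∀ (φ : ℝ → ℝ) (a b x₀ : ℝ) (μ : Measure ℝ),
        0 ≤ a → 0 ≤ b → 0 ≤ x₀ →
        (∫⁻ s in Ioi (0:ℝ), ENNReal.ofReal (min 1 s) ∂μ ≠ ⊤) →
        (∀ x : ℝ, 0 < x →
          φ x = a + b * x + ∫ s in Ioi (0:ℝ), (1 - Real.exp (-x * s)) ∂μ) →
        WLSC (fun x => -(deriv (deriv φ) x)) (α - 2) c x₀ →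
        ∀ x : ℝ, x₀ < x →
          C * -(deriv (deriv φ) x) ≤ ∫ s in Ioo (0:ℝ) (1 / x), s ^ 2 ∂μ := by
  obtain ⟨l, hl1, hl⟩ := aux_choice α c hc
  refine ⟨c * l ^ (α - 2) - Real.exp (-(l - 1)), by linarith, ?_⟩
  intro φ a b x₀ μ _ _ hx₀ hμ hφ hW x hx
  have hx0 : 0 < x := by linarith
  have hlx : 0 < l * x := by nlinarith
  have hw := hW l hl1 x hx
  simp only [aux_second φ a b μ hμ hφ x hx0, aux_second φ a b μ hμ hφ (l * x) hlx] at hw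
  rw [aux_second φ a b μ hμ hφ x hx0]
  have hxi : 0 < 1 / x := by positivity
  have hset : Ioo (0:ℝ) (1 / x) ⊆ Ioi 0 := fun s hs => hs.1
  have hrr : (μ.restrict (Ioi 0)).restrict (Ioo 0 (1 / x)) = μ.restrict (Ioo 0 (1 / x)) :=
    Measure.restrict_restrict_of_subset hset
  -- integrability of the truncated second moment
  have hI : Integrable ((Ioo (0:ℝ) (1 / x)).indicator fun s => s ^ 2) (μ.restrict (Ioi 0)) := by
    refine aux_int_of_le μ hμ _
      ((by fun_prop : Measurable fun s : ℝ => s ^ 2).indicator measurableSet_Ioo)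
      (1 / x * (1 + 1 / x)) fun s hs => ?_
    by_cases hm : s ∈ Ioo (0:ℝ) (1 / x)
    · rw [indicator_of_mem hm, Real.norm_of_nonneg (by positivity), sq, mul_assoc]
      refine mul_le_mul hm.2.le ?_ hs.le hxi.le
      rcases le_total 1 s with h | h
      · rw [min_eq_left h]; linarith [hm.2]
      · rw [min_eq_right h]; nlinarith
    · rw [indicator_of_notMem hm, norm_zero]
      have : 0 ≤ min 1 s := le_min zero_le_one hs.le
      positivity
  have hle : ∫ s in Ioi (0:ℝ), s ^ 2 * Real.exp (-(l * x) * s) ∂μ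
      ≤ ∫ s in Ioi (0:ℝ), ((Ioo (0:ℝ) (1 / x)).indicator (fun s => s ^ 2) s
          + Real.exp (-(l - 1)) * (s ^ 2 * Real.exp (-x * s))) ∂μ := by
    refine integral_mono_ae (aux_int2 μ hμ _ hlx)
      (hI.add ((aux_int2 μ hμ x hx0).const_mul _)) ?_
    filter_upwards [ae_restrict_mem measurableSet_Ioi] with s hs
    have hs : 0 < s := hs
    by_cases hm : s ∈ Ioo (0:ℝ) (1 / x)
    · rw [indicator_of_mem hm]
      have h2 : Real.exp (-(l * x) * s) ≤ 1 :=
        Real.exp_le_one_iff.2 (by nlinarith [mul_pos hlx hs])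
      have : 0 ≤ Real.exp (-(l - 1)) * (s ^ 2 * Real.exp (-x * s)) := by positivity
      nlinarith [sq_nonneg s]
    · rw [indicator_of_notMem hm, zero_add]
      have h1 : 1 ≤ x * s := by
        have : 1 / x ≤ s := by
          by_contra hcon
          exact hm ⟨hs, not_le.1 hcon⟩
        rw [div_le_iff₀ hx0] at this
        linarith
      have h2 : Real.exp (-(l * x) * s) ≤ Real.exp (-(l - 1)) * Real.exp (-x * s) := by
        rw [← Real.exp_add]
        exact Real.exp_le_exp.2 (by nlinarith)
      nlinarith [mul_le_mul_of_nonneg_left h2 (sq_nonneg s)]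
  rw [integral_add hI ((aux_int2 μ hμ x hx0).const_mul _), integral_const_mul,
    integral_indicator measurableSet_Ioo, hrr] at hle
  linarith
end
end

section
/- Let φ be a Bernstein function and suppose −φ'' ∈ WLSC(α−2, c, x₀) for some c ∈ (0,1], x₀ ≥ 0 and α > 0. Then there exist a complete Bernstein function f and a constant C ≥ 1 such that C^{−1}·φ(x) ≤ f(x) ≤ C·φ(x) for all x > 0, and C^{−1}·(−φ''(x)) ≤ −f''(x) ≤ C·(−φ''(x)) for all x > x₀. -/
open MeasureTheory Real Set

noncomputable section

/-- A function is completely monotone (on `(0,∞)`) if it is smooth there and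
`(−1)^n f^{(n)} ≥ 0` for all `n`. -/
def IsCompletelyMonotone (f : ℝ → ℝ) : Prop :=
  ContDiffOn ℝ (⊤ : ℕ∞) f (Ioi 0) ∧
    ∀ (n : ℕ) (x : ℝ), 0 < x → 0 ≤ (-1 : ℝ) ^ n * iteratedDeriv n f x

/-- A Bernstein function: nonnegative, smooth on `(0,∞)`, with completely
monotone derivative. -/
def IsBernstein (φ : ℝ → ℝ) : Prop :=
  (∀ x : ℝ, 0 < x → 0 ≤ φ x) ∧ ContDiffOn ℝ (⊤ : ℕ∞) φ (Ioi 0) ∧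
    IsCompletelyMonotone (deriv φ)

/-- A complete Bernstein function: a Bernstein function whose representing measure
has a completely monotone density with respect to Lebesgue measure. -/
def IsCompleteBernstein (f : ℝ → ℝ) : Prop :=
  IsBernstein f ∧
    ∃ a b : ℝ, 0 ≤ a ∧ 0 ≤ b ∧
      ∃ m : ℝ → ℝ, IsCompletelyMonotone m ∧ (∀ x : ℝ, 0 < x → 0 ≤ m x) ∧
        (∫⁻ s in Ioi (0:ℝ), ENNReal.ofReal (min 1 s * m s) ≠ ⊤) ∧
        ∀ x : ℝ, 0 < x →
          f x = a + b * x + ∫ s in Ioi (0:ℝ), (1 - Real.exp (-x * s)) * m s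

open Filter Topology

/-- A sequence of functions, each minus the derivative of the previous one, all nonnegative. -/
structure CMSeq (F : ℕ → ℝ → ℝ) : Prop where
  der : ∀ n x, 0 < x → HasDerivAt (F n) (-(F (n + 1) x)) x
  nonneg : ∀ n x, 0 < x → 0 ≤ F n x

lemma CMSeq.shift {F : ℕ → ℝ → ℝ} (h : CMSeq F) : CMSeq (fun n => F (n + 1)) :=
  ⟨fun n x hx => h.der (n + 1) x hx, fun n x hx => h.nonneg (n + 1) x hx⟩

lemma contDiffOn_seq {F : ℕ → ℝ → ℝ}
    (h : ∀ n x, 0 < x → HasDerivAt (F n) (-(F (n + 1) x)) x) (k : ℕ) :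
    ∀ n, ContDiffOn ℝ k (F n) (Ioi 0) := by
  induction k with
  | zero =>
    intro n
    have : ContinuousOn (F n) (Ioi 0) := fun x hx =>
      (h n x hx).continuousAt.continuousWithinAt
    exact_mod_cast (contDiffOn_zero (𝕜 := ℝ)).2 this
  | succ k ih =>
    intro n
    have := (contDiffOn_succ_iff_deriv_of_isOpen (𝕜 := ℝ) (n := (k : WithTop ℕ∞)) (f := F n)
      (s := Ioi (0 : ℝ)) isOpen_Ioi).2 ⟨fun x hx => (h n x hx).differentiableAt.differentiableWithinAt,
        by simp, ((ih (n + 1)).neg).congr (fun x hx => (h n x hx).deriv)⟩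
    exact_mod_cast this

lemma CMSeq.isCM {F : ℕ → ℝ → ℝ} (h : CMSeq F) {g : ℝ → ℝ} (hg : ∀ x, 0 < x → g x = F 0 x) :
    IsCompletelyMonotone g := by
  have key : ∀ n x, 0 < x → iteratedDeriv n g x = (-1) ^ n * F n x := by
    intro n
    induction n with
    | zero => intro x hx; simp [hg x hx]
    | succ n ih =>
      intro x hx
      rw [iteratedDeriv_succ]
      have : iteratedDeriv n g =ᶠ[𝓝 x] fun y => (-1) ^ n * F n y := by
        filter_upwards [Ioi_mem_nhds hx] with y hy using ih y hy
      rw [this.deriv_eq, ((h.der n x hx).const_mul _).deriv]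
      ring
  refine ⟨?_, fun n x hx => ?_⟩
  · have : ContDiffOn ℝ (⊤ : ℕ∞) (F 0) (Ioi 0) :=
      contDiffOn_infty.2 (fun n => contDiffOn_seq h.der n 0)
    exact this.congr (fun x hx => hg x hx)
  · rw [key n x hx, ← mul_assoc, ← mul_pow]
    simpa using h.nonneg n x hx

lemma seq_of_isCM {g : ℝ → ℝ} (h : IsCompletelyMonotone g) :
    CMSeq (fun n x => (-1) ^ n * iteratedDeriv n g x) := by
  refine ⟨fun n x hx => ?_, fun n x hx => h.2 n x hx⟩
  have hd : DifferentiableAt ℝ (iteratedDeriv n g) x := by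
    have h1 : ∀ n, ContDiffOn ℝ (⊤ : ℕ∞) (iteratedDeriv n g) (Ioi 0) := by
      intro n
      induction n with
      | zero => simpa using h.1
      | succ n ih =>
        rw [iteratedDeriv_succ]
        exact ((contDiffOn_infty_iff_deriv_of_isOpen isOpen_Ioi).1 ih).2
    exact (((contDiffOn_infty_iff_deriv_of_isOpen isOpen_Ioi).1 (h1 n)).1 x hx).differentiableAt
      (Ioi_mem_nhds hx)
  have := (hd.hasDerivAt).const_mul ((-1 : ℝ) ^ n)
  refine this.congr_deriv ?_
  rw [iteratedDeriv_succ]; ring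

lemma CMSeq.anti {F : ℕ → ℝ → ℝ} (h : CMSeq F) (n : ℕ) : AntitoneOn (F n) (Ioi 0) := by
  apply antitoneOn_of_deriv_nonpos (convex_Ioi 0)
  · exact fun x hx => (h.der n x hx).continuousAt.continuousWithinAt
  · intro x hx; rw [interior_Ioi] at hx
    exact (h.der n x hx).differentiableAt.differentiableWithinAt
  · intro x hx; rw [interior_Ioi] at hx
    rw [(h.der n x hx).deriv]; linarith [h.nonneg (n + 1) x hx]

/-- Mean value inequality for CM sequences. -/
lemma CMSeq.mv {F : ℕ → ℝ → ℝ} (h : CMSeq F) (n : ℕ) {x y : ℝ} (hx : 0 < x) (hxy : x < y) :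
    (y - x) * F (n + 1) y ≤ F n x - F n y := by
  obtain ⟨z, hz, hz'⟩ := exists_hasDerivAt_eq_slope (F n) (fun z => -(F (n + 1) z)) hxy
    (fun z hz => (h.der n z (hx.trans_le hz.1)).continuousAt.continuousWithinAt)
    (fun z hz => h.der n z (hx.trans hz.1))
  have h1 : F (n + 1) y ≤ F (n + 1) z := h.anti (n + 1) (hx.trans hz.1) (hx.trans hxy) hz.2.le
  have h2 : 0 < y - x := sub_pos.2 hxy
  rw [eq_div_iff h2.ne'] at hz'
  nlinarith

lemma CMSeq.taylor_lower (n : ℕ) : ∀ {F : ℕ → ℝ → ℝ}, CMSeq F → ∀ {x y : ℝ}, 0 < x → x ≤ y →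
    (y - x) ^ n / n.factorial * F n y ≤ F 0 x := by
  induction n with
  | zero => intro F h x y hx hxy; simpa using h.anti 0 hx (hx.trans_le hxy) hxy
  | succ n ih =>
    intro F h x y hx hxy
    have hA : AntitoneOn (fun z => F 0 z - (y - z) ^ (n + 1) / (n + 1).factorial * F (n + 1) y)
        (Icc x y) := by
      have hd : ∀ z, 0 < z → HasDerivAt
          (fun z => F 0 z - (y - z) ^ (n + 1) / (n + 1).factorial * F (n + 1) y)
          (-(F 1 z) + (y - z) ^ n / n.factorial * F (n + 1) y) z := by
        intro z hz
        have h1 := (((hasDerivAt_id z).const_sub y).pow (n + 1)).div_const ((n + 1).factorial : ℝ)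
        have h2 := (h.der 0 z hz).sub (h1.mul_const (F (n + 1) y))
        refine h2.congr_deriv ?_
        have : (n.factorial : ℝ) ≠ 0 := by positivity
        push_cast [Nat.factorial_succ]
        simp only [id]
        field_simp
        ring
      apply antitoneOn_of_deriv_nonpos (convex_Icc x y)
      · exact fun z hz => (hd z (hx.trans_le hz.1)).continuousAt.continuousWithinAt
      · intro z hz; rw [interior_Icc] at hz
        exact (hd z (hx.trans hz.1)).differentiableAt.differentiableWithinAt
      · intro z hz; rw [interior_Icc] at hz
        rw [(hd z (hx.trans hz.1)).deriv]
        have := ih h.shift (hx.trans hz.1) hz.2.le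
        simp only [zero_add] at this
        linarith
    have := hA ⟨le_refl x, hxy⟩ ⟨hxy, le_refl y⟩ hxy
    simp only [sub_self] at this
    have h0 := h.nonneg 0 y (hx.trans_le hxy)
    rw [zero_pow (by omega)] at this
    simp at this
    simp
    linarith

lemma CMSeq.taylor_upper (n : ℕ) : ∀ {F : ℕ → ℝ → ℝ}, CMSeq F → ∀ {x q : ℝ}, 0 < x → x ≤ q →
    (∀ k, F k q = 0) → F 0 x ≤ (q - x) ^ n / n.factorial * F n x := by
  induction n with
  | zero => intro F h x y hx hxy _; simp
  | succ n ih =>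
    intro F h x q hx hxy hq
    have hA : MonotoneOn (fun z => F 0 z - (q - z) ^ (n + 1) / (n + 1).factorial * F (n + 1) x)
        (Icc x q) := by
      have hd : ∀ z, 0 < z → HasDerivAt
          (fun z => F 0 z - (q - z) ^ (n + 1) / (n + 1).factorial * F (n + 1) x)
          (-(F 1 z) + (q - z) ^ n / n.factorial * F (n + 1) x) z := by
        intro z hz
        have h1 := (((hasDerivAt_id z).const_sub q).pow (n + 1)).div_const ((n + 1).factorial : ℝ)
        have h2 := (h.der 0 z hz).sub (h1.mul_const (F (n + 1) x))
        refine h2.congr_deriv ?_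
        have : (n.factorial : ℝ) ≠ 0 := by positivity
        push_cast [Nat.factorial_succ]
        simp only [id]
        field_simp
        ring
      apply monotoneOn_of_deriv_nonneg (convex_Icc x q)
      · exact fun z hz => (hd z (hx.trans_le hz.1)).continuousAt.continuousWithinAt
      · intro z hz; rw [interior_Icc] at hz
        exact (hd z (hx.trans hz.1)).differentiableAt.differentiableWithinAt
      · intro z hz; rw [interior_Icc] at hz
        rw [(hd z (hx.trans hz.1)).deriv]
        have := ih h.shift (hx.trans hz.1) hz.2.le (fun k => hq (k + 1))
        simp only [zero_add] at this
        have h3 : F (n + 1) z ≤ F (n + 1) x := h.anti (n + 1) hx (hx.trans hz.1) hz.1.le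
        have h4 : 0 ≤ (q - z) ^ n / n.factorial :=
          div_nonneg (pow_nonneg (by linarith [hz.2]) _) (by positivity)
        nlinarith [mul_le_mul_of_nonneg_left h3 h4]
    have := hA ⟨le_refl x, hxy⟩ ⟨hxy, le_refl q⟩ hxy
    simp only [sub_self] at this
    rw [zero_pow (by omega), hq 0] at this
    simp at this
    simp
    linarith

lemma CMSeq.zero_step {F : ℕ → ℝ → ℝ} (h : CMSeq F) {p : ℝ} (hp : 0 < p) (h0 : F 0 p = 0) :
    F 0 (9 / 10 * p) = 0 := by
  have hq : ∀ k, F k (11 / 10 * p) = 0 := by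
    intro k
    have h1 := CMSeq.taylor_lower k h hp (y := 11 / 10 * p) (by linarith)
    have h2 := h.nonneg k (11 / 10 * p) (by linarith)
    rw [h0] at h1
    have h3 : 0 < (11 / 10 * p - p) ^ k / k.factorial :=
      div_pos (pow_pos (by linarith) _) (by positivity)
    nlinarith
  have hb : ∀ n : ℕ, F 0 (9 / 10 * p) ≤ (1 / 2) ^ n * F 0 (4 / 10 * p) := by
    intro n
    have h1 := CMSeq.taylor_upper n h (x := 9 / 10 * p) (by linarith) (by linarith) hq
    have h2 := CMSeq.taylor_lower n h (x := 4 / 10 * p) (y := 9 / 10 * p) (by linarith) (by linarith)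
    have h3 : (11 / 10 * p - 9 / 10 * p) ^ n ≤ (1 / 2) ^ n * (9 / 10 * p - 4 / 10 * p) ^ n := by
      rw [← mul_pow]
      apply pow_le_pow_left₀ <;> linarith
    have h4 := h.nonneg n (9 / 10 * p) (by linarith)
    calc F 0 (9 / 10 * p) ≤ _ := h1
      _ ≤ ((1 / 2) ^ n * (9 / 10 * p - 4 / 10 * p) ^ n) / n.factorial * F n (9 / 10 * p) := by
        gcongr
      _ = (1 / 2) ^ n * ((9 / 10 * p - 4 / 10 * p) ^ n / n.factorial * F n (9 / 10 * p)) := by ring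
      _ ≤ _ := by gcongr
  have ht : Tendsto (fun n : ℕ => ((1 : ℝ) / 2) ^ n * F 0 (4 / 10 * p)) atTop (𝓝 (0 * F 0 (4 / 10 * p))) :=
    (tendsto_pow_atTop_nhds_zero_of_lt_one (by norm_num) (by norm_num)).mul_const _
  rw [zero_mul] at ht
  exact le_antisymm (ge_of_tendsto' ht hb) (h.nonneg 0 _ (by linarith))

lemma CMSeq.zero_all {F : ℕ → ℝ → ℝ} (h : CMSeq F) {p : ℝ} (hp : 0 < p) (h0 : F 0 p = 0)
    {x : ℝ} (hx : 0 < x) : F 0 x = 0 := by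
  have hk : ∀ k : ℕ, F 0 ((9 / 10) ^ k * p) = 0 := by
    intro k
    induction k with
    | zero => simpa using h0
    | succ k ih =>
      have := h.zero_step (by positivity) ih
      rw [pow_succ]
      rw [← this]; ring_nf
  obtain ⟨k, hk'⟩ := exists_pow_lt_of_lt_one (div_pos hx hp) (show (9 / 10 : ℝ) < 1 by norm_num)
  rw [lt_div_iff₀ hp] at hk'
  have h1 := h.anti 0 (show (9 / 10 : ℝ) ^ k * p ∈ Ioi 0 by simp; positivity) hx hk'.le
  rw [hk k] at h1
  exact le_antisymm h1 (h.nonneg 0 x hx)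

section Kernel

variable {w : ℝ → ℝ}

lemma integrable_kernel (hwi : IntegrableOn (fun t => w t / (1 + t)) (Ioi 0))
    {k : ℝ → ℝ} (hk : Measurable k) {B : ℝ} (hB : ∀ t, 0 < t → |k t| ≤ B / (1 + t)) :
    IntegrableOn (fun t => k t * w t) (Ioi 0) := by
  have h1 : IntegrableOn (fun t => (k t * (1 + t)) * (w t / (1 + t))) (Ioi 0) := by
    apply Integrable.bdd_mul hwi (c := B)
    · exact (hk.mul (measurable_const.add measurable_id)).aestronglyMeasurable
    · filter_upwards [ae_restrict_mem measurableSet_Ioi] with t ht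
      have ht' : (0 : ℝ) < t := ht
      have h2 := hB t ht
      rw [le_div_iff₀ (by linarith)] at h2
      rw [Real.norm_eq_abs, abs_mul, abs_of_pos (show (0 : ℝ) < 1 + t by linarith)]
      exact h2
  refine h1.congr_fun (fun t ht => ?_) measurableSet_Ioi
  have ht' : (0 : ℝ) < t := ht
  have : 1 + t ≠ 0 := by linarith
  simp only
  field_simp

lemma aesm_w (hwi : IntegrableOn (fun t => w t / (1 + t)) (Ioi 0)) :
    AEStronglyMeasurable w (volume.restrict (Ioi 0)) := by
  have h1 := hwi.aestronglyMeasurable.mul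
    ((measurable_const.add measurable_id).aestronglyMeasurable
      (f := fun t : ℝ => 1 + t) (μ := volume.restrict (Ioi 0)))
  refine h1.congr ?_
  filter_upwards [ae_restrict_mem measurableSet_Ioi] with t ht
  have ht' : (0 : ℝ) < t := ht
  have : 1 + t ≠ 0 := by linarith
  simp only [Pi.mul_apply]
  field_simp

lemma hasDeriv_kernel (hwi : IntegrableOn (fun t => w t / (1 + t)) (Ioi 0))
    (hw0 : ∀ t, 0 < t → 0 ≤ w t)
    {K K' : ℝ → ℝ → ℝ} {P : ℝ → ℝ → ℝ} (hKm : ∀ x, Measurable (K x)) (hKm' : ∀ x, Measurable (K' x))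
    (hd : ∀ x t, 0 < x → 0 < t → HasDerivAt (fun y => K y t) (K' x t) x)
    (hb : ∀ x, 0 < x → IntegrableOn (fun t => K x t * w t) (Ioi 0))
    (hP : ∀ x, 0 < x → IntegrableOn (fun t => P x t * w t) (Ioi 0))
    (hb' : ∀ x y t, 0 < x → x < y → 0 < t → |K' y t| ≤ P x t)
    {x : ℝ} (hx : 0 < x) :
    HasDerivAt (fun y => ∫ t in Ioi (0 : ℝ), K y t * w t)
      (∫ t in Ioi (0 : ℝ), K' x t * w t) x := by
  have hm := aesm_w hwi
  refine (hasDerivAt_integral_of_dominated_loc_of_deriv_le (s := Ioi (x / 2))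
    (F := fun y t => K y t * w t) (F' := fun y t => K' y t * w t)
    (bound := fun t => P (x / 2) t * w t) (Ioi_mem_nhds (by linarith)) ?_ (hb x hx) ?_ ?_
    (hP (x / 2) (by linarith)) ?_).2
  · exact Eventually.of_forall fun y => (hKm y).aestronglyMeasurable.mul hm
  · exact (hKm' x).aestronglyMeasurable.mul hm
  · filter_upwards [ae_restrict_mem measurableSet_Ioi] with t ht y hy
    rw [Real.norm_eq_abs, abs_mul, abs_of_nonneg (hw0 t ht)]
    exact mul_le_mul_of_nonneg_right (hb' _ _ _ (by linarith) hy ht) (hw0 t ht)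
  · filter_upwards [ae_restrict_mem measurableSet_Ioi] with t ht y hy
    have hy' : x / 2 < y := hy
    exact (hd y t (by linarith) ht).mul_const _

lemma frac_bound (n : ℕ) {x t : ℝ} (hx : 0 < x) (ht : 0 < t) :
    |t / (x + t) ^ (n + 2)| ≤ ((1 + x⁻¹) / x ^ n) / (1 + t) := by
  rw [abs_of_pos (by positivity), div_le_div_iff₀ (by positivity) (by positivity), div_mul_eq_mul_div,
    le_div_iff₀ (by positivity)]
  have h1 : x ^ n ≤ (x + t) ^ n := by gcongr; linarith
  have h2 : 1 + t ≤ (1 + x⁻¹) * (x + t) := by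
    have : (1 + x⁻¹) * (x + t) = x + t + 1 + x⁻¹ * t := by field_simp; ring
    rw [this]
    have : 0 < x⁻¹ * t := by positivity
    linarith
  calc t * (1 + t) * x ^ n ≤ (x + t) * ((1 + x⁻¹) * (x + t)) * (x + t) ^ n := by
        gcongr; linarith
    _ = _ := by ring

lemma frac_integrable (hwi : IntegrableOn (fun t => w t / (1 + t)) (Ioi 0)) (n : ℕ) {x : ℝ}
    (hx : 0 < x) : IntegrableOn (fun t => t / (x + t) ^ (n + 2) * w t) (Ioi 0) :=
  integrable_kernel hwi (by fun_prop) (fun _ ht => frac_bound n hx ht)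

lemma frac1_integrable (hwi : IntegrableOn (fun t => w t / (1 + t)) (Ioi 0)) {x : ℝ}
    (hx : 0 < x) : IntegrableOn (fun t => x / (x + t) * w t) (Ioi 0) := by
  refine integrable_kernel hwi (by fun_prop) (B := x + 1) (fun t ht => ?_)
  rw [abs_of_pos (by positivity), div_le_div_iff₀ (by positivity) (by positivity)]
  nlinarith

lemma frac_deriv (hwi : IntegrableOn (fun t => w t / (1 + t)) (Ioi 0))
    (hw0 : ∀ t, 0 < t → 0 ≤ w t) (n : ℕ) {x : ℝ} (hx : 0 < x) :
    HasDerivAt (fun y => ∫ t in Ioi (0 : ℝ), t / (y + t) ^ (n + 2) * w t)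
      (-((n + 2) * ∫ t in Ioi (0 : ℝ), t / (x + t) ^ (n + 3) * w t)) x := by
  have h := hasDeriv_kernel hwi hw0 (K := fun y t => t / (y + t) ^ (n + 2))
    (K' := fun y t => -((n + 2) * (t / (y + t) ^ (n + 3))))
    (P := fun y t => ((n + 2) * (t / (y + t) ^ (n + 3))))
    (fun x => by fun_prop) (fun x => by fun_prop) ?_ (fun x hx => frac_integrable hwi n hx) ?_ ?_ hx
  · refine h.congr_deriv ?_
    rw [← integral_const_mul, ← integral_neg]
    congr 1; ext t; ring
  · intro x t hx ht
    have h1 : HasDerivAt (fun y : ℝ => (y + t) ^ (n + 2)) ((n + 2 : ℕ) * (x + t) ^ (n + 1) * 1) x := by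
      exact ((hasDerivAt_id x).add_const t).pow (n + 2)
    have h2 := (hasDerivAt_const x t).div h1 (by positivity)
    refine h2.congr_deriv ?_
    push_cast
    have : x + t ≠ 0 := by positivity
    field_simp
    ring
  · intro x hx
    have := (frac_integrable hwi (n + 1) hx).const_mul ((n : ℝ) + 2)
    refine Integrable.congr this (Eventually.of_forall fun t => ?_)
    simp only; ring
  · intro x y t hx hxy ht
    have hy : 0 < y := hx.trans hxy
    rw [abs_neg, abs_of_pos (by positivity)]
    gcongr

lemma frac1_deriv (hwi : IntegrableOn (fun t => w t / (1 + t)) (Ioi 0))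
    (hw0 : ∀ t, 0 < t → 0 ≤ w t) {x : ℝ} (hx : 0 < x) :
    HasDerivAt (fun y => ∫ t in Ioi (0 : ℝ), y / (y + t) * w t)
      (∫ t in Ioi (0 : ℝ), t / (x + t) ^ 2 * w t) x := by
  refine hasDeriv_kernel hwi hw0 (K := fun y t => y / (y + t))
    (K' := fun y t => t / (y + t) ^ 2)
    (P := fun y t => t / (y + t) ^ 2)
    (fun x => by fun_prop) (fun x => by fun_prop) ?_ (fun x hx => frac1_integrable hwi hx)
    (fun x hx => frac_integrable hwi 0 hx) ?_ hx
  · intro x t hx ht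
    have h2 := (hasDerivAt_id x).div ((hasDerivAt_id x).add_const t)
      (by simp only [id]; positivity)
    refine h2.congr_deriv ?_
    simp only [id]
    ring
  · intro x y t hx hxy ht
    have hy : 0 < y := hx.trans hxy
    rw [abs_of_pos (by positivity)]
    gcongr

lemma exp_bound (n : ℕ) {s t : ℝ} (hs : 0 < s) (ht : 0 < t) :
    |exp (-(t * s)) * t ^ n| ≤ (n.factorial / s ^ n + (n + 1).factorial / s ^ (n + 1)) / (1 + t) := by
  have key : ∀ m : ℕ, exp (-(t * s)) * t ^ m ≤ m.factorial / s ^ m := by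
    intro m
    have h1 := Real.pow_div_factorial_le_exp (t * s) (by positivity) m
    rw [Real.exp_neg, inv_mul_le_iff₀ (exp_pos _)]
    rw [div_le_iff₀ (by positivity), mul_pow] at h1
    rw [← mul_div_assoc, le_div_iff₀ (by positivity)]
    exact h1
  rw [abs_of_pos (by positivity), le_div_iff₀ (by positivity)]
  have := key n
  have := key (n + 1)
  rw [pow_succ] at this
  nlinarith

lemma exp_integrable (hwi : IntegrableOn (fun t => w t / (1 + t)) (Ioi 0)) (n : ℕ) {s : ℝ}
    (hs : 0 < s) : IntegrableOn (fun t => exp (-(t * s)) * t ^ n * w t) (Ioi 0) :=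
  integrable_kernel hwi (by fun_prop) (fun _ ht => exp_bound n hs ht)

lemma exp_deriv (hwi : IntegrableOn (fun t => w t / (1 + t)) (Ioi 0))
    (hw0 : ∀ t, 0 < t → 0 ≤ w t) (n : ℕ) {x : ℝ} (hx : 0 < x) :
    HasDerivAt (fun y => ∫ t in Ioi (0 : ℝ), exp (-(t * y)) * t ^ n * w t)
      (-(∫ t in Ioi (0 : ℝ), exp (-(t * x)) * t ^ (n + 1) * w t)) x := by
  have h := hasDeriv_kernel hwi hw0 (K := fun y t => exp (-(t * y)) * t ^ n)
    (K' := fun y t => -(exp (-(t * y)) * t ^ (n + 1)))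
    (P := fun y t => exp (-(t * y)) * t ^ (n + 1))
    (fun x => by fun_prop) (fun x => by fun_prop) ?_ (fun x hx => exp_integrable hwi n hx)
    (fun x hx => exp_integrable hwi (n + 1) hx) ?_ hx
  · refine h.congr_deriv ?_
    rw [← integral_neg]
    congr 1; ext t; ring
  · intro x t hx ht
    have h1 := ((((hasDerivAt_id x).const_mul t).neg).exp).mul_const (t ^ n)
    refine h1.congr_deriv ?_
    simp only [id, Pi.neg_apply]
    ring
  · intro x y t hx hxy ht
    rw [abs_neg, abs_of_pos (by positivity)]
    gcongr

/-- The density. -/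
def dens (w : ℝ → ℝ) (s : ℝ) : ℝ := ∫ t in Ioi (0 : ℝ), exp (-(t * s)) * t ^ 1 * w t

lemma dens_cm (hwi : IntegrableOn (fun t => w t / (1 + t)) (Ioi 0))
    (hw0 : ∀ t, 0 < t → 0 ≤ w t) : IsCompletelyMonotone (dens w) := by
  have : CMSeq (fun n s => ∫ t in Ioi (0 : ℝ), exp (-(t * s)) * t ^ (n + 1) * w t) := by
    refine ⟨fun n x hx => exp_deriv hwi hw0 (n + 1) hx, fun n x hx => ?_⟩
    refine setIntegral_nonneg measurableSet_Ioi fun t ht => ?_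
    have ht' : (0 : ℝ) < t := ht
    have := hw0 t ht
    positivity
  exact this.isCM (fun x hx => rfl)

lemma inner_integral {x t : ℝ} (hx : 0 < x) (ht : 0 < t) :
    IntegrableOn (fun s => (1 - exp (-x * s)) * (exp (-(t * s)) * t ^ 1)) (Ioi 0) ∧
    ∫ s in Ioi (0 : ℝ), (1 - exp (-x * s)) * (exp (-(t * s)) * t ^ 1) = x / (x + t) := by
  have e : (fun s => (1 - exp (-x * s)) * (exp (-(t * s)) * t ^ 1))
      = fun s => t * exp ((-t) * s) - t * exp ((-(x + t)) * s) := by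
    ext s
    have : exp ((-(x + t)) * s) = exp (-x * s) * exp (-(t * s)) := by
      rw [← exp_add]; congr 1; ring
    rw [this, neg_mul t s]; ring
  have i1 := (integrableOn_exp_mul_Ioi (a := -t) (by linarith) 0).const_mul t
  have i2 := (integrableOn_exp_mul_Ioi (a := -(x + t)) (by linarith) 0).const_mul t
  rw [e]
  refine ⟨i1.sub i2, ?_⟩
  rw [integral_sub i1 i2, integral_const_mul, integral_const_mul,
    integral_exp_mul_Ioi (by linarith), integral_exp_mul_Ioi (by linarith)]
  have : x + t ≠ 0 := by positivity
  rw [mul_zero, mul_zero, exp_zero, neg_div_neg_eq, neg_div_neg_eq]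
  field_simp
  ring

lemma fubini_integrable (hwi : IntegrableOn (fun t => w t / (1 + t)) (Ioi 0))
    (hw0 : ∀ t, 0 < t → 0 ≤ w t) {x : ℝ} (hx : 0 < x) :
    Integrable (Function.uncurry fun s t => (1 - exp (-x * s)) * (exp (-(t * s)) * t ^ 1) * w t)
      ((volume.restrict (Ioi 0)).prod (volume.restrict (Ioi 0))) := by
  have hm := aesm_w hwi
  rw [integrable_prod_iff']
  · constructor
    · filter_upwards [ae_restrict_mem measurableSet_Ioi] with t ht
      exact (inner_integral hx ht).1.mul_const (w t)
    · refine Integrable.congr (frac1_integrable hwi hx) ?_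
      filter_upwards [ae_restrict_mem measurableSet_Ioi] with t ht
      have ht' : (0 : ℝ) < t := ht
      rw [← (inner_integral hx ht).2, ← integral_mul_const]
      refine setIntegral_congr_fun measurableSet_Ioi fun s hs => ?_
      have hs' : (0 : ℝ) < s := hs
      simp only [Function.uncurry_apply_pair]
      rw [Real.norm_eq_abs, abs_of_nonneg]
      have h1 : exp (-x * s) ≤ 1 := exp_le_one_iff.2 (by nlinarith)
      have := hw0 t ht
      have : 0 ≤ 1 - exp (-x * s) := by linarith
      positivity
  · refine AEStronglyMeasurable.mul (f := fun z : ℝ × ℝ => (1 - exp (-x * z.1)) * (exp (-(z.2 * z.1)) * z.2 ^ 1))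
      (g := fun z : ℝ × ℝ => w z.2) ?_ hm.comp_snd
    exact Continuous.aestronglyMeasurable (by fun_prop)

lemma dens_repr (hwi : IntegrableOn (fun t => w t / (1 + t)) (Ioi 0))
    (hw0 : ∀ t, 0 < t → 0 ≤ w t) {x : ℝ} (hx : 0 < x) :
    IntegrableOn (fun s => (1 - exp (-x * s)) * dens w s) (Ioi 0) ∧
    ∫ s in Ioi (0 : ℝ), (1 - exp (-x * s)) * dens w s = ∫ t in Ioi (0 : ℝ), x / (x + t) * w t := by
  have hf := fubini_integrable hwi hw0 hx
  have e : ∀ s, (1 - exp (-x * s)) * dens w s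
      = ∫ t in Ioi (0 : ℝ), (1 - exp (-x * s)) * (exp (-(t * s)) * t ^ 1) * w t := by
    intro s
    rw [dens, ← integral_const_mul]
    congr 1; ext t; ring
  simp_rw [e]
  refine ⟨hf.integral_prod_left, ?_⟩
  rw [integral_integral_swap hf]
  refine setIntegral_congr_fun measurableSet_Ioi fun t ht => ?_
  rw [← (inner_integral hx ht).2, ← integral_mul_const]

/-- The complete Bernstein function with Stieltjes density `w`. -/
def cbf (a b : ℝ) (w : ℝ → ℝ) (x : ℝ) : ℝ := a + b * x + ∫ t in Ioi (0 : ℝ), x / (x + t) * w t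

/-- Derivatives of `cbf`. -/
def cbfSeq (b : ℝ) (w : ℝ → ℝ) (n : ℕ) (x : ℝ) : ℝ :=
  (if n = 0 then b else 0) + (n + 1).factorial * ∫ t in Ioi (0 : ℝ), t / (x + t) ^ (n + 2) * w t

lemma cbf_deriv (hwi : IntegrableOn (fun t => w t / (1 + t)) (Ioi 0))
    (hw0 : ∀ t, 0 < t → 0 ≤ w t) (a b : ℝ) {x : ℝ} (hx : 0 < x) :
    HasDerivAt (cbf a b w) (cbfSeq b w 0 x) x := by
  have h := (((hasDerivAt_id x).const_mul b).const_add a).add (frac1_deriv hwi hw0 hx)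
  refine h.congr_deriv ?_
  simp [cbfSeq]

lemma cbfSeq_cm (hwi : IntegrableOn (fun t => w t / (1 + t)) (Ioi 0))
    (hw0 : ∀ t, 0 < t → 0 ≤ w t) {b : ℝ} (hb : 0 ≤ b) : CMSeq (cbfSeq b w) := by
  refine ⟨fun n x hx => ?_, fun n x hx => ?_⟩
  · have h := ((frac_deriv hwi hw0 n hx).const_mul ((n + 1).factorial : ℝ)).const_add
      (if n = 0 then b else 0)
    refine h.congr_deriv ?_
    unfold cbfSeq
    rw [Nat.factorial_succ (n + 1)]
    push_cast
    ring
  · have h1 : 0 ≤ ∫ t in Ioi (0 : ℝ), t / (x + t) ^ (n + 2) * w t := by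
      refine setIntegral_nonneg measurableSet_Ioi fun t ht => ?_
      have ht' : (0 : ℝ) < t := ht
      have := hw0 t ht
      positivity
    unfold cbfSeq
    split_ifs <;> positivity

lemma cbf_complete (hwi : IntegrableOn (fun t => w t / (1 + t)) (Ioi 0))
    (hw0 : ∀ t, 0 < t → 0 ≤ w t) {a b : ℝ} (ha : 0 ≤ a) (hb : 0 ≤ b) :
    IsCompleteBernstein (cbf a b w) := by
  have hcm := dens_cm hwi hw0
  have hm0 : ∀ x : ℝ, 0 < x → 0 ≤ dens w x := fun x hx => by simpa using hcm.2 0 x hx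
  have hd : IsCompletelyMonotone (deriv (cbf a b w)) :=
    (cbfSeq_cm hwi hw0 hb).isCM (fun x hx => (cbf_deriv hwi hw0 a b hx).deriv)
  refine ⟨⟨fun x hx => ?_, ?_, hd⟩, a, b, ha, hb, dens w, hcm, hm0, ?_, fun x hx => ?_⟩
  · have h1 : 0 ≤ ∫ t in Ioi (0 : ℝ), x / (x + t) * w t := by
      refine setIntegral_nonneg measurableSet_Ioi fun t ht => ?_
      have ht' : (0 : ℝ) < t := ht
      have := hw0 t ht
      positivity
    unfold cbf
    positivity
  · exact (contDiffOn_infty_iff_deriv_of_isOpen isOpen_Ioi).2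
      ⟨fun x hx => (cbf_deriv hwi hw0 a b hx).differentiableAt.differentiableWithinAt, hd.1⟩
  · have h1 := (dens_repr hwi hw0 one_pos).1.const_mul 2
    have h2 := h1.lintegral_lt_top
    refine ne_top_of_le_ne_top h2.ne (setLIntegral_mono' measurableSet_Ioi fun s hs => ?_)
    have hs' : (0 : ℝ) < s := hs
    apply ENNReal.ofReal_le_ofReal
    rw [← mul_assoc]
    refine mul_le_mul_of_nonneg_right ?_ (hm0 s hs)
    have h3 : exp (-1 * s) ≤ 1 / (1 + s) := by
      rw [neg_one_mul, exp_neg, one_div]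
      gcongr
      linarith [Real.add_one_le_exp s]
    have h4 : min 1 s ≤ 2 * (1 - 1 / (1 + s)) := by
      have : 2 * (1 - 1 / (1 + s)) = 2 * s / (1 + s) := by field_simp; ring
      rw [this, le_div_iff₀ (by positivity)]
      rcases le_total 1 s with h | h
      · rw [min_eq_left h]; linarith
      · rw [min_eq_right h]; nlinarith
    linarith
  · rw [(dens_repr hwi hw0 hx).2]; rfl

end Kernel

section Compare

variable {φ : ℝ → ℝ} {G : ℕ → ℝ → ℝ}

lemma phi_mv (hG : CMSeq G) (hφ : ∀ x, 0 < x → HasDerivAt φ (G 0 x) x) {x y : ℝ} (hx : 0 < x)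
    (hxy : x < y) : (y - x) * G 0 y ≤ φ y - φ x := by
  obtain ⟨z, hz, hz'⟩ := exists_hasDerivAt_eq_slope φ (G 0) hxy
    (fun z hz => (hφ z (hx.trans_le hz.1)).continuousAt.continuousWithinAt)
    (fun z hz => hφ z (hx.trans hz.1))
  have h1 : G 0 y ≤ G 0 z := hG.anti 0 (hx.trans hz.1) (hx.trans hxy) hz.2.le
  have h2 : 0 < y - x := sub_pos.2 hxy
  rw [eq_div_iff h2.ne'] at hz'
  nlinarith

lemma phi_mono (hG : CMSeq G) (hφ : ∀ x, 0 < x → HasDerivAt φ (G 0 x) x) :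
    MonotoneOn φ (Ioi 0) := by
  intro x hx y hy hxy
  rcases hxy.eq_or_lt with h | h
  · rw [h]
  · have h1 := phi_mv hG hφ hx h
    have h2 := mul_nonneg (sub_nonneg.2 hxy) (hG.nonneg 0 y hy)
    linarith

lemma exists_a (hG : CMSeq G) (hφ : ∀ x, 0 < x → HasDerivAt φ (G 0 x) x)
    (hφ0 : ∀ x, 0 < x → 0 ≤ φ x) :
    ∃ a, 0 ≤ a ∧ Tendsto φ (𝓝[>] 0) (𝓝 a) ∧ ∀ x, 0 < x → x * G 0 x ≤ φ x - a := by
  have hb : BddBelow (φ '' Ioi 0) := ⟨0, by rintro _ ⟨x, hx, rfl⟩; exact hφ0 x hx⟩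
  have ht := (phi_mono hG hφ).tendsto_nhdsGT hb
  refine ⟨_, ?_, ht, fun x hx => ?_⟩
  · exact ge_of_tendsto ht (by filter_upwards [self_mem_nhdsWithin] with x hx using hφ0 x hx)
  · have h1 : Tendsto (fun y => (x - y) * G 0 x) (𝓝[>] 0) (𝓝 ((x - 0) * G 0 x)) :=
      (((continuous_const.sub continuous_id).mul continuous_const).tendsto (0 : ℝ)).mono_left
        nhdsWithin_le_nhds
    rw [sub_zero] at h1
    refine le_of_tendsto_of_tendsto h1 (ht.const_sub (φ x)) ?_
    filter_upwards [Ioo_mem_nhdsGT hx] with y hy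
    exact phi_mv hG hφ hy.1 hy.2

lemma exists_b (hG : CMSeq G) :
    ∃ b, 0 ≤ b ∧ Tendsto (G 0) atTop (𝓝 b) ∧ ∀ x, 0 < x → b ≤ G 0 x := by
  have hanti : Antitone (fun x => G 0 (max x 1)) := by
    intro x y hxy
    exact hG.anti 0 (mem_Ioi.2 (lt_max_of_lt_right one_pos)) (mem_Ioi.2 (lt_max_of_lt_right one_pos))
      (max_le_max_right 1 hxy)
  have hb : BddBelow (range fun x => G 0 (max x 1)) :=
    ⟨0, by rintro _ ⟨x, rfl⟩; exact hG.nonneg 0 _ (lt_max_of_lt_right one_pos)⟩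
  have ht := tendsto_atTop_ciInf hanti hb
  have ht' : Tendsto (G 0) atTop (𝓝 (⨅ x, G 0 (max x 1))) := by
    refine ht.congr' ?_
    filter_upwards [eventually_ge_atTop 1] with x hx
    rw [max_eq_left hx]
  refine ⟨_, ?_, ht', fun x hx => ?_⟩
  · exact ge_of_tendsto ht' (by filter_upwards [eventually_gt_atTop 0] with x hx using hG.nonneg 0 x hx)
  · exact le_of_tendsto ht' (by
      filter_upwards [eventually_ge_atTop x] with y hy using hG.anti 0 hx (hx.trans_le hy) hy)

lemma sq_G1_le (hG : CMSeq G) (hφ : ∀ x, 0 < x → HasDerivAt φ (G 0 x) x) {a : ℝ}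
    (ha : ∀ x, 0 < x → x * G 0 x ≤ φ x - a) {t : ℝ} (ht : 0 < t) :
    t ^ 2 * G 1 t ≤ 4 * (φ t - a) := by
  have h1 := hG.mv 0 (half_pos ht) (half_lt_self ht)
  have h2 := hG.nonneg 0 t ht
  have h3 := ha (t / 2) (half_pos ht)
  have h4 := phi_mono hG hφ (half_pos ht) ht (half_lt_self ht).le
  simp only [zero_add] at h1
  nlinarith

lemma tendsto_zero_limits (hG : CMSeq G) (hφ : ∀ x, 0 < x → HasDerivAt φ (G 0 x) x) {a : ℝ}
    (hta : Tendsto φ (𝓝[>] 0) (𝓝 a)) (ha : ∀ x, 0 < x → x * G 0 x ≤ φ x - a) :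
    Tendsto (fun t => t * G 0 t) (𝓝[>] 0) (𝓝 0) ∧
    Tendsto (fun t => t ^ 2 * G 1 t) (𝓝[>] 0) (𝓝 0) := by
  have h0 : Tendsto (fun t => φ t - a) (𝓝[>] 0) (𝓝 0) := by simpa using hta.sub_const a
  constructor
  · refine squeeze_zero' ?_ ?_ h0
    · filter_upwards [self_mem_nhdsWithin] with t ht
      exact mul_nonneg (le_of_lt ht) (hG.nonneg 0 t ht)
    · filter_upwards [self_mem_nhdsWithin] with t ht using ha t ht
  · have h1 : Tendsto (fun t => 4 * (φ t - a)) (𝓝[>] 0) (𝓝 0) := by simpa using h0.const_mul 4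
    refine squeeze_zero' ?_ ?_ h1
    · filter_upwards [self_mem_nhdsWithin] with t ht
      exact mul_nonneg (sq_nonneg t) (hG.nonneg 1 t ht)
    · filter_upwards [self_mem_nhdsWithin] with t ht using sq_G1_le hG hφ ha ht

lemma tendsto_top_limits (hG : CMSeq G) {b : ℝ} (hb : Tendsto (G 0) atTop (𝓝 b)) :
    Tendsto (fun t => t * G 1 t) atTop (𝓝 0) ∧ Tendsto (G 1) atTop (𝓝 0) := by
  have h0 : Tendsto (fun t => 2 * (G 0 (t / 2) - G 0 t)) atTop (𝓝 0) := by
    have h1 : Tendsto (fun t : ℝ => G 0 (t / 2)) atTop (𝓝 b) :=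
      hb.comp (tendsto_id.atTop_div_const (by norm_num))
    simpa using (h1.sub hb).const_mul 2
  have h1 : Tendsto (fun t => t * G 1 t) atTop (𝓝 0) := by
    refine squeeze_zero' ?_ ?_ h0
    · filter_upwards [eventually_gt_atTop 0] with t ht
      exact mul_nonneg (le_of_lt ht) (hG.nonneg 1 t ht)
    · filter_upwards [eventually_gt_atTop 0] with t ht
      have h1 := hG.mv 0 (half_pos ht) (half_lt_self ht)
      simp only [zero_add] at h1
      linarith
  refine ⟨h1, squeeze_zero' ?_ ?_ h1⟩
  · filter_upwards [eventually_gt_atTop 0] with t ht using hG.nonneg 1 t ht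
  · filter_upwards [eventually_ge_atTop 1] with t ht
    have := hG.nonneg 1 t (by linarith)
    nlinarith

lemma integral_near (hG : CMSeq G) (hφ : ∀ x, 0 < x → HasDerivAt φ (G 0 x) x) {a : ℝ}
    (hta : Tendsto φ (𝓝[>] 0) (𝓝 a)) (ha : ∀ x, 0 < x → x * G 0 x ≤ φ x - a)
    {x : ℝ} (hx : 0 < x) :
    IntegrableOn (fun t => t ^ 2 * G 2 t) (Ioc 0 x) ∧
    ∫ t in Ioc 0 x, t ^ 2 * G 2 t = 2 * (φ x - a) - 2 * (x * G 0 x) - x ^ 2 * G 1 x := by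
  obtain ⟨l0, l1⟩ := tendsto_zero_limits hG hφ hta ha
  let P : ℝ → ℝ := fun t => 2 * (φ t - a) - 2 * (t * G 0 t) - t ^ 2 * G 1 t
  let Q : ℝ → ℝ := fun t => if 0 < t then P t else 0
  have hP : ∀ t, 0 < t → HasDerivAt P (t ^ 2 * G 2 t) t := by
    intro t ht
    have h := ((((hφ t ht).sub_const a).const_mul 2).sub
      (((hasDerivAt_id t).mul (hG.der 0 t ht)).const_mul 2)).sub
      (((hasDerivAt_id t).pow 2).mul (hG.der 1 t ht))
    refine h.congr_deriv ?_
    simp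
    ring
  have hQ : ∀ t, 0 < t → HasDerivAt Q (t ^ 2 * G 2 t) t := by
    intro t ht
    refine (hP t ht).congr_of_eventuallyEq ?_
    filter_upwards [Ioi_mem_nhds ht] with y hy
    exact if_pos hy
  have lP : Tendsto Q (𝓝[>] 0) (𝓝 0) := by
    have : Tendsto P (𝓝[>] 0) (𝓝 0) := by
      simpa using (((hta.sub_const a).const_mul 2).sub (l0.const_mul 2)).sub l1
    refine this.congr' ?_
    filter_upwards [self_mem_nhdsWithin] with y hy
    exact (if_pos hy).symm
  have hc : ContinuousOn Q (Icc 0 x) := by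
    intro t ht
    rcases ht.1.eq_or_lt with h | h
    · subst h
      have : ContinuousWithinAt Q (Ioi 0) 0 := by
        simpa [ContinuousWithinAt, Q] using lP
      exact (continuousWithinAt_Ioi_iff_Ici.1 this).mono Icc_subset_Ici_self
    · exact (hQ t h).continuousAt.continuousWithinAt
  have hi := intervalIntegral.integrableOn_deriv_of_nonneg hc (fun t ht => hQ t ht.1)
    (fun t ht => mul_nonneg (sq_nonneg t) (hG.nonneg 2 t ht.1))
  refine ⟨hi, ?_⟩
  rw [← intervalIntegral.integral_of_le hx.le,
    intervalIntegral.integral_eq_sub_of_hasDerivAt_of_le hx.le hc (fun t ht => hQ t ht.1)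
      ((intervalIntegrable_iff_integrableOn_Ioc_of_le hx.le).2 hi)]
  simp [Q, hx, P]

lemma integral_far (hG : CMSeq G) {b : ℝ} (hb : Tendsto (G 0) atTop (𝓝 b)) {x : ℝ} (hx : 0 < x) :
    IntegrableOn (fun t => t * G 2 t) (Ioi x) ∧
    ∫ t in Ioi x, t * G 2 t = x * G 1 x + G 0 x - b := by
  have hd : ∀ t ∈ Ici x, HasDerivAt (fun t => -(t * G 1 t) - G 0 t) (t * G 2 t) t := by
    intro t ht
    have ht' : 0 < t := hx.trans_le ht
    have h := (((hasDerivAt_id t).mul (hG.der 1 t ht')).neg).sub (hG.der 0 t ht')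
    refine h.congr_deriv ?_
    simp
  have hp : ∀ t ∈ Ioi x, 0 ≤ t * G 2 t := fun t ht =>
    mul_nonneg (hx.trans ht).le (hG.nonneg 2 t (hx.trans ht))
  have hl : Tendsto (fun t => -(t * G 1 t) - G 0 t) atTop (𝓝 (-0 - b)) :=
    ((tendsto_top_limits hG hb).1.neg).sub hb
  refine ⟨integrableOn_Ioi_deriv_of_nonneg' hd hp hl, ?_⟩
  rw [integral_Ioi_of_hasDerivAt_of_nonneg' hd hp hl]
  ring

lemma integral_far' (hG : CMSeq G) {b : ℝ} (hb : Tendsto (G 0) atTop (𝓝 b)) {x : ℝ} (hx : 0 < x) :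
    IntegrableOn (fun t => G 2 t) (Ioi x) ∧ ∫ t in Ioi x, G 2 t = G 1 x := by
  have hd : ∀ t ∈ Ici x, HasDerivAt (fun t => -(G 1 t)) (G 2 t) t := by
    intro t ht
    have ht' : 0 < t := hx.trans_le ht
    refine (hG.der 1 t ht').neg.congr_deriv ?_
    simp
  have hp : ∀ t ∈ Ioi x, 0 ≤ G 2 t := fun t ht => hG.nonneg 2 t (hx.trans ht)
  have hl : Tendsto (fun t => -(G 1 t)) atTop (𝓝 (-0)) := (tendsto_top_limits hG hb).2.neg
  refine ⟨integrableOn_Ioi_deriv_of_nonneg' hd hp hl, ?_⟩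
  rw [integral_Ioi_of_hasDerivAt_of_nonneg' hd hp hl]
  ring

lemma w_integrable (hG : CMSeq G) (hφ : ∀ x, 0 < x → HasDerivAt φ (G 0 x) x) {a b : ℝ}
    (hta : Tendsto φ (𝓝[>] 0) (𝓝 a)) (ha : ∀ x, 0 < x → x * G 0 x ≤ φ x - a)
    (hb : Tendsto (G 0) atTop (𝓝 b)) :
    IntegrableOn (fun t => t ^ 2 * G 2 t / (1 + t)) (Ioi 0) := by
  have hc : ContinuousOn (fun t => t ^ 2 * G 2 t / (1 + t)) (Ioi 0) := by
    have : ContinuousOn (G 2) (Ioi 0) := fun t ht =>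
      (hG.der 2 t ht).continuousAt.continuousWithinAt
    refine ((continuousOn_id.pow 2).mul this).div (by fun_prop) ?_
    intro t ht
    have : (0 : ℝ) < t := ht
    positivity
  rw [← Ioc_union_Ioi_eq_Ioi (zero_le_one (α := ℝ))]
  refine IntegrableOn.union ?_ ?_
  · refine Integrable.mono' (integral_near hG hφ hta ha one_pos).1
      ((hc.mono Ioc_subset_Ioi_self).aestronglyMeasurable measurableSet_Ioc) ?_
    filter_upwards [ae_restrict_mem measurableSet_Ioc] with t ht
    have ht' : (0 : ℝ) < t := ht.1
    have := hG.nonneg 2 t ht'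
    rw [Real.norm_eq_abs, abs_of_nonneg (by positivity)]
    exact div_le_self (by positivity) (by linarith)
  · refine Integrable.mono' (integral_far hG hb one_pos).1
      ((hc.mono (Ioi_subset_Ioi zero_le_one)).aestronglyMeasurable measurableSet_Ioi) ?_
    filter_upwards [ae_restrict_mem measurableSet_Ioi] with t ht
    have ht' : (0 : ℝ) < t := one_pos.trans ht
    have := hG.nonneg 2 t ht'
    rw [Real.norm_eq_abs, abs_of_nonneg (by positivity), div_le_iff₀ (by positivity)]
    have : 0 ≤ t * G 2 t := by positivity
    nlinarith

lemma compare_phi (hG : CMSeq G) (hφ : ∀ x, 0 < x → HasDerivAt φ (G 0 x) x) {a b : ℝ}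
    (ha0 : 0 ≤ a) (hb0 : 0 ≤ b)
    (hta : Tendsto φ (𝓝[>] 0) (𝓝 a)) (ha : ∀ x, 0 < x → x * G 0 x ≤ φ x - a)
    (hb : Tendsto (G 0) atTop (𝓝 b)) (hb1 : ∀ x, 0 < x → b ≤ G 0 x) {x : ℝ} (hx : 0 < x) :
    φ x ≤ 2 * cbf a b (fun t => t ^ 2 * G 2 t) x ∧
    cbf a b (fun t => t ^ 2 * G 2 t) x ≤ 2 * φ x := by
  have hwi := w_integrable hG hφ hta ha hb
  have hi := frac1_integrable (w := fun t => t ^ 2 * G 2 t) hwi hx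
  obtain ⟨i1, e1⟩ := integral_near hG hφ hta ha hx
  obtain ⟨i2, e2⟩ := integral_far hG hb hx
  unfold cbf
  have j1 := hi.mono_set (show Ioc 0 x ⊆ Ioi 0 from Ioc_subset_Ioi_self)
  have j2 := hi.mono_set (Ioi_subset_Ioi hx.le)
  rw [← Ioc_union_Ioi_eq_Ioi hx.le, setIntegral_union (Ioc_disjoint_Ioi le_rfl) measurableSet_Ioi j1 j2]
  have u1 : ∫ t in Ioc 0 x, x / (x + t) * (t ^ 2 * G 2 t) ≤ ∫ t in Ioc 0 x, t ^ 2 * G 2 t := by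
    refine setIntegral_mono_on j1 i1 measurableSet_Ioc fun t ht => ?_
    have ht' : (0 : ℝ) < t := ht.1
    have := hG.nonneg 2 t ht'
    refine mul_le_of_le_one_left (by positivity) ?_
    rw [div_le_one (by positivity)]; linarith
  have v1 : ∫ t in Ioc 0 x, 1 / 2 * (t ^ 2 * G 2 t) ≤ ∫ t in Ioc 0 x, x / (x + t) * (t ^ 2 * G 2 t) := by
    refine setIntegral_mono_on (i1.const_mul _) j1 measurableSet_Ioc fun t ht => ?_
    have ht' : (0 : ℝ) < t := ht.1
    have := hG.nonneg 2 t ht'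
    refine mul_le_mul_of_nonneg_right ?_ (by positivity)
    rw [div_le_div_iff₀ (by positivity) (by positivity)]; linarith [ht.2]
  have u2 : ∫ t in Ioi x, x / (x + t) * (t ^ 2 * G 2 t) ≤ ∫ t in Ioi x, x * (t * G 2 t) := by
    refine setIntegral_mono_on j2 (i2.const_mul _) measurableSet_Ioi fun t ht => ?_
    have ht' : (0 : ℝ) < t := hx.trans ht
    have := hG.nonneg 2 t ht'
    have e : x / (x + t) * (t ^ 2 * G 2 t) = (t / (x + t)) * (x * (t * G 2 t)) := by ring
    rw [e]
    refine mul_le_of_le_one_left (by positivity) ?_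
    rw [div_le_one (by positivity)]; linarith
  have v2 : ∫ t in Ioi x, (x / 2) * (t * G 2 t) ≤ ∫ t in Ioi x, x / (x + t) * (t ^ 2 * G 2 t) := by
    refine setIntegral_mono_on (i2.const_mul _) j2 measurableSet_Ioi fun t ht => ?_
    have ht' : (0 : ℝ) < t := hx.trans ht
    have ht2 : x < t := ht
    have := hG.nonneg 2 t ht'
    have e : x / (x + t) * (t ^ 2 * G 2 t) = (t / (x + t)) * (x * (t * G 2 t)) := by ring
    have e' : (x / 2) * (t * G 2 t) = (1 / 2) * (x * (t * G 2 t)) := by ring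
    rw [e, e']
    refine mul_le_mul_of_nonneg_right ?_ (by positivity)
    rw [div_le_div_iff₀ (by positivity) (by positivity)]; linarith
  rw [integral_const_mul] at v1 u2 v2
  rw [e1] at u1 v1
  rw [e2] at u2 v2
  have h1 := ha x hx
  have h2 := mul_le_mul_of_nonneg_left (hb1 x hx) hx.le
  have h3 := mul_nonneg hb0 hx.le
  constructor <;> nlinarith

lemma integral_cube (hG : CMSeq G) (hφ : ∀ x, 0 < x → HasDerivAt φ (G 0 x) x) {a : ℝ}
    (hta : Tendsto φ (𝓝[>] 0) (𝓝 a)) (ha : ∀ x, 0 < x → x * G 0 x ≤ φ x - a)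
    {D x : ℝ} (hx : 0 < x) (hD : ∀ t, 0 < t → t ≤ x → t ^ 2 * G 1 t ≤ D * (x ^ 2 * G 1 x)) :
    IntegrableOn (fun t => t * (t ^ 2 * G 2 t)) (Ioc 0 x) ∧
    ∫ t in Ioc 0 x, t * (t ^ 2 * G 2 t) ≤ 3 * D * (x ^ 3 * G 1 x) := by
  obtain ⟨l0, l1⟩ := tendsto_zero_limits hG hφ hta ha
  have hi : IntegrableOn (fun t => t * (t ^ 2 * G 2 t)) (Ioc 0 x) := by
    refine Integrable.bdd_mul (integral_near hG hφ hta ha hx).1 (c := x)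
      continuous_id.aestronglyMeasurable ?_
    filter_upwards [ae_restrict_mem measurableSet_Ioc] with t ht
    rw [Real.norm_eq_abs, abs_of_pos ht.1]; exact ht.2
  refine ⟨hi, ?_⟩
  let M := D * (x ^ 2 * G 1 x)
  let H : ℝ → ℝ := fun t => 3 * M * t - t * (t ^ 2 * G 1 t)
  have hH : ∀ t, 0 < t → HasDerivAt H (3 * M - 3 * t ^ 2 * G 1 t + t * (t ^ 2 * G 2 t)) t := by
    intro t ht
    have h := ((hasDerivAt_id t).const_mul (3 * M)).sub
      ((hasDerivAt_id t).mul (((hasDerivAt_id t).pow 2).mul (hG.der 1 t ht)))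
    refine h.congr_deriv ?_
    simp
    ring
  have hc : ContinuousOn H (Icc 0 x) := by
    intro t ht
    rcases ht.1.eq_or_lt with h | h
    · subst h
      have hid : Tendsto (fun t : ℝ => t) (𝓝[>] 0) (𝓝 0) := nhdsWithin_le_nhds
      have : ContinuousWithinAt H (Ioi 0) 0 := by
        have := (hid.const_mul (3 * M)).sub (hid.mul l1)
        simpa [ContinuousWithinAt, H] using this
      exact (continuousWithinAt_Ioi_iff_Ici.1 this).mono Icc_subset_Ici_self
    · exact (hH t h).continuousAt.continuousWithinAt
  have key := intervalIntegral.integral_le_sub_of_hasDeriv_right_of_le hx.le hc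
    (fun t ht => (hH t ht.1).hasDerivWithinAt) ((integrableOn_Icc_iff_integrableOn_Ioc).2 hi)
    (fun t ht => by
      have := hD t ht.1 ht.2.le
      simp only [M]; linarith)
  rw [intervalIntegral.integral_of_le hx.le] at key
  refine key.trans ?_
  simp only [H, M]
  have := hG.nonneg 1 x hx
  have : 0 ≤ x * (x ^ 2 * G 1 x) := by positivity
  nlinarith

lemma compare_second (hG : CMSeq G) (hφ : ∀ x, 0 < x → HasDerivAt φ (G 0 x) x) {a b : ℝ}
    (hta : Tendsto φ (𝓝[>] 0) (𝓝 a)) (ha : ∀ x, 0 < x → x * G 0 x ≤ φ x - a)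
    (hb : Tendsto (G 0) atTop (𝓝 b))
    {D x : ℝ} (hx : 0 < x) (hD : ∀ t, 0 < t → t ≤ x → t ^ 2 * G 1 t ≤ D * (x ^ 2 * G 1 x)) :
    G 1 x / 4 ≤ cbfSeq b (fun t => t ^ 2 * G 2 t) 1 x ∧
    cbfSeq b (fun t => t ^ 2 * G 2 t) 1 x ≤ (2 + 6 * D) * G 1 x := by
  have hwi := w_integrable hG hφ hta ha hb
  have hi := frac_integrable (w := fun t => t ^ 2 * G 2 t) hwi 1 hx
  obtain ⟨i1, e1⟩ := integral_cube hG hφ hta ha hx hD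
  obtain ⟨i2, e2⟩ := integral_far' hG hb hx
  have j1 := hi.mono_set (show Ioc 0 x ⊆ Ioi 0 from Ioc_subset_Ioi_self)
  have j2 := hi.mono_set (Ioi_subset_Ioi hx.le)
  unfold cbfSeq
  rw [← Ioc_union_Ioi_eq_Ioi hx.le, setIntegral_union (Ioc_disjoint_Ioi le_rfl) measurableSet_Ioi j1 j2]
  have v1 : 0 ≤ ∫ t in Ioc 0 x, t / (x + t) ^ (1 + 2) * (t ^ 2 * G 2 t) := by
    refine setIntegral_nonneg measurableSet_Ioc fun t ht => ?_
    have ht' : (0 : ℝ) < t := ht.1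
    have := hG.nonneg 2 t ht'
    positivity
  have u1 : ∫ t in Ioc 0 x, t / (x + t) ^ (1 + 2) * (t ^ 2 * G 2 t)
      ≤ ∫ t in Ioc 0 x, (x ^ 3)⁻¹ * (t * (t ^ 2 * G 2 t)) := by
    refine setIntegral_mono_on j1 (i1.const_mul _) measurableSet_Ioc fun t ht => ?_
    have ht' : (0 : ℝ) < t := ht.1
    have := hG.nonneg 2 t ht'
    rw [div_mul_eq_mul_div, div_eq_inv_mul]
    refine mul_le_mul_of_nonneg_right ?_ (by positivity)
    gcongr
    linarith
  have u2 : ∫ t in Ioi x, t / (x + t) ^ (1 + 2) * (t ^ 2 * G 2 t) ≤ ∫ t in Ioi x, G 2 t := by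
    refine setIntegral_mono_on j2 i2 measurableSet_Ioi fun t ht => ?_
    have ht' : (0 : ℝ) < t := hx.trans ht
    have := hG.nonneg 2 t ht'
    have e : t / (x + t) ^ (1 + 2) * (t ^ 2 * G 2 t) = (t / (x + t)) ^ 3 * G 2 t := by
      rw [div_pow]; ring
    rw [e]
    refine mul_le_of_le_one_left (by positivity) (pow_le_one₀ (by positivity) ?_)
    rw [div_le_one (by positivity)]; linarith
  have v2 : ∫ t in Ioi x, 1 / 8 * G 2 t ≤ ∫ t in Ioi x, t / (x + t) ^ (1 + 2) * (t ^ 2 * G 2 t) := by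
    refine setIntegral_mono_on (i2.const_mul _) j2 measurableSet_Ioi fun t ht => ?_
    have ht' : (0 : ℝ) < t := hx.trans ht
    have ht2 : x < t := ht
    have := hG.nonneg 2 t ht'
    have e : t / (x + t) ^ (1 + 2) * (t ^ 2 * G 2 t) = (t / (x + t)) ^ 3 * G 2 t := by
      rw [div_pow]; ring
    rw [e]
    refine mul_le_mul_of_nonneg_right ?_ (by positivity)
    have : (1 / 2 : ℝ) ≤ t / (x + t) := by
      rw [div_le_div_iff₀ (by positivity) (by positivity)]; linarith
    calc (1 / 8 : ℝ) = (1 / 2) ^ 3 := by norm_num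
      _ ≤ _ := by gcongr
  rw [integral_const_mul] at u1 v2
  rw [e2] at u2 v2
  have u3 : (x ^ 3)⁻¹ * ∫ t in Ioc 0 x, t * (t ^ 2 * G 2 t) ≤ 3 * D * G 1 x := by
    rw [inv_mul_le_iff₀ (by positivity)]
    linarith
  simp only [one_ne_zero, if_false, zero_add]
  norm_num [Nat.factorial]
  constructor <;> nlinarith

/-- The scaling condition gives almost monotonicity of `t ^ 2 * G 1 t`. -/
lemma scaling_bound (hG : CMSeq G) (hφ : ∀ x, 0 < x → HasDerivAt φ (G 0 x) x)
    (hφ0 : ∀ x, 0 < x → 0 ≤ φ x)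
    {α c x₀ : ℝ} (hα : 0 < α) (hc : 0 < c) (hc1 : c ≤ 1) (hx₀ : 0 ≤ x₀)
    (hs : WLSC (G 1) (α - 2) c x₀) :
    ∃ D, 1 ≤ D ∧ ∀ x, x₀ < x → ∀ t, 0 < t → t ≤ x → t ^ 2 * G 1 t ≤ D * (x ^ 2 * G 1 x) := by
  have base : ∀ t x, x₀ < t → t ≤ x → c * (t ^ 2 * G 1 t) ≤ x ^ 2 * G 1 x := by
    intro t x ht htx
    have ht0 : 0 < t := hx₀.trans_lt ht
    have hx0 : 0 < x := ht0.trans_le htx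
    have h1 : 1 ≤ x / t := (one_le_div ht0).2 htx
    have h := hs (x / t) h1 t ht
    rw [div_mul_cancel₀ _ ht0.ne'] at h
    have h2 : (x / t) ^ (-2 : ℝ) ≤ (x / t) ^ (α - 2) :=
      Real.rpow_le_rpow_of_exponent_le h1 (by linarith)
    have h3 : (x / t) ^ (-2 : ℝ) = t ^ 2 / x ^ 2 := by
      rw [Real.rpow_neg (by positivity)]
      norm_num [div_pow]
    rw [h3] at h2
    have h4 : c * (t ^ 2 / x ^ 2) * G 1 t ≤ G 1 x := by
      refine le_trans ?_ h
      have := hG.nonneg 1 t ht0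
      gcongr
    calc c * (t ^ 2 * G 1 t) = x ^ 2 * (c * (t ^ 2 / x ^ 2) * G 1 t) := by field_simp
      _ ≤ _ := by gcongr
  have hci : 1 ≤ c⁻¹ := (one_le_inv₀ hc).2 hc1
  have base' : ∀ t x, x₀ < t → t ≤ x → t ^ 2 * G 1 t ≤ c⁻¹ * (x ^ 2 * G 1 x) := by
    intro t x ht htx
    have := base t x ht htx
    rwa [le_inv_mul_iff₀ hc]
  rcases hx₀.eq_or_lt with h0 | h0
  · refine ⟨c⁻¹, hci, fun x hx t ht htx => base' t x (by rw [← h0]; exact ht) htx⟩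
  have h2x : 0 < 2 * x₀ := by linarith
  rcases (hG.nonneg 1 (2 * x₀) h2x).eq_or_lt with hz | hz
  · refine ⟨1, le_rfl, fun x hx t ht htx => ?_⟩
    have h1 := hG.shift.zero_all h2x hz.symm ht
    have h2 := hG.shift.zero_all h2x hz.symm (h0.trans hx)
    simp only [zero_add] at h1 h2
    rw [h1, h2]; simp
  · let E := 4 * φ x₀ / (c * (x₀ ^ 2 * G 1 (2 * x₀)))
    have hden : 0 < c * (x₀ ^ 2 * G 1 (2 * x₀)) := by positivity
    refine ⟨max c⁻¹ E, le_max_of_le_left hci, fun x hx t ht htx => ?_⟩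
    have hxp : 0 < x := h0.trans hx
    have hnn : 0 ≤ x ^ 2 * G 1 x := mul_nonneg (sq_nonneg x) (hG.nonneg 1 x hxp)
    rcases lt_or_ge x₀ t with h | h
    · exact (base' t x h htx).trans (mul_le_mul_of_nonneg_right (le_max_left _ _) hnn)
    · obtain ⟨a, ha0, hta, ha⟩ := exists_a hG hφ hφ0
      have h1 := sq_G1_le hG hφ ha ht
      have h2 : φ t ≤ φ x₀ := phi_mono hG hφ ht h0 h
      have h3 : c * (x₀ ^ 2 * G 1 (2 * x₀)) ≤ x ^ 2 * G 1 x := by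
        rcases le_total (2 * x₀) x with h4 | h4
        · refine le_trans ?_ (base (2 * x₀) x (by linarith) h4)
          gcongr
          linarith
        · have h5 : G 1 (2 * x₀) ≤ G 1 x := hG.anti 1 hxp h2x h4
          calc c * (x₀ ^ 2 * G 1 (2 * x₀)) ≤ 1 * (x ^ 2 * G 1 x) := by gcongr
            _ = _ := one_mul _
      have h6 : 0 ≤ E := div_nonneg (by linarith [hφ0 x₀ h0]) hden.le
      calc t ^ 2 * G 1 t ≤ 4 * φ x₀ := by linarith
        _ = E * (c * (x₀ ^ 2 * G 1 (2 * x₀))) := by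
          simp only [E]; exact (div_mul_cancel₀ _ hden.ne').symm
        _ ≤ E * (x ^ 2 * G 1 x) := by gcongr
        _ ≤ _ := mul_le_mul_of_nonneg_right (le_max_right _ _) hnn

end Compare

/-- If `φ` is a Bernstein function with `−φ'' ∈ WLSC(α−2,c,x₀)`,
then there is a complete Bernstein function `f` with `f ≈ φ` on `(0,∞)` and
`−f'' ≈ −φ''` on `(x₀,∞)`. -/
theorem exists_comparable_complete_bernstein
    (φ : ℝ → ℝ) (α c x₀ : ℝ)
    (hBern : IsBernstein φ)
    (hα : 0 < α) (hc : 0 < c) (hc1 : c ≤ 1) (hx₀ : 0 ≤ x₀)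
    (hscal : WLSC (fun x => -(deriv (deriv φ) x)) (α - 2) c x₀) :
    ∃ f : ℝ → ℝ, IsCompleteBernstein f ∧
      ∃ C : ℝ, 1 ≤ C ∧
        (∀ x : ℝ, 0 < x → C⁻¹ * φ x ≤ f x ∧ f x ≤ C * φ x) ∧
        (∀ x : ℝ, x₀ < x →
          C⁻¹ * -(deriv (deriv φ) x) ≤ -(deriv (deriv f) x) ∧
            -(deriv (deriv f) x) ≤ C * -(deriv (deriv φ) x)) := by
  set G : ℕ → ℝ → ℝ := fun n x => (-1) ^ n * iteratedDeriv n (deriv φ) x with hGdef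
  have hG : CMSeq G := seq_of_isCM hBern.2.2
  have hφ0 := hBern.1
  have hG0 : ∀ x, G 0 x = deriv φ x := fun x => by simp [hGdef]
  have hG1 : ∀ x, G 1 x = -(deriv (deriv φ) x) := fun x => by simp [hGdef]
  have hφ : ∀ x, 0 < x → HasDerivAt φ (G 0 x) x := by
    intro x hx
    rw [hG0]
    exact ((hBern.2.1.differentiableOn (by simp) x hx).differentiableAt
      (Ioi_mem_nhds hx)).hasDerivAt
  have hs : WLSC (G 1) (α - 2) c x₀ := by
    have : G 1 = fun x => -(deriv (deriv φ) x) := funext hG1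
    rw [this]; exact hscal
  obtain ⟨D, hD1, hD⟩ := scaling_bound hG hφ hφ0 hα hc hc1 hx₀ hs
  obtain ⟨a, ha0, hta, ha⟩ := exists_a hG hφ hφ0
  obtain ⟨b, hb0, hb, hb1⟩ := exists_b hG
  have hwi := w_integrable hG hφ hta ha hb
  have hw0 : ∀ t, 0 < t → 0 ≤ t ^ 2 * G 2 t := fun t ht =>
    mul_nonneg (sq_nonneg t) (hG.nonneg 2 t ht)
  refine ⟨cbf a b (fun t => t ^ 2 * G 2 t), cbf_complete hwi hw0 ha0 hb0, 2 + 6 * D,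
    by linarith, fun x hx => ?_, fun x hx => ?_⟩
  · obtain ⟨h1, h2⟩ := compare_phi hG hφ ha0 hb0 hta ha hb hb1 hx
    have h3 := hφ0 x hx
    constructor
    · rw [inv_mul_le_iff₀ (by linarith)]
      nlinarith
    · nlinarith
  · have hxp : 0 < x := hx₀.trans_lt hx
    obtain ⟨h1, h2⟩ := compare_second hG hφ hta ha hb hxp (hD x hx)
    have hdd : -(deriv (deriv (cbf a b (fun t => t ^ 2 * G 2 t))) x)
        = cbfSeq b (fun t => t ^ 2 * G 2 t) 1 x := by
      have : deriv (cbf a b (fun t => t ^ 2 * G 2 t)) =ᶠ[𝓝 x]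
          cbfSeq b (fun t => t ^ 2 * G 2 t) 0 := by
        filter_upwards [Ioi_mem_nhds hxp] with y hy
        exact (cbf_deriv hwi hw0 a b hy).deriv
      rw [this.deriv_eq, ((cbfSeq_cm hwi hw0 hb0).der 0 x hxp).deriv, neg_neg]
    have h3 := hG.nonneg 1 x hxp
    rw [hdd, ← hG1]
    refine ⟨?_, h2⟩
    rw [inv_mul_le_iff₀ (by linarith)]
    nlinarith
end
end

section
/- Let f be a completely monotone function that has the doubling property on (x₀, ∞) for some x₀ ≥ 0, i.e. there is C₁ ≥ 1 such that C₁^{−1} f(x) ≤ f(2x) ≤ C₁ f(x) for all x > x₀. Then there is C > 0 such that f(x) ≥ C·x·|f'(x)| for all x > x₀. -/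
open Real Set

noncomputable section

/-- A completely monotone function with the doubling property on
`(x₀,∞)` satisfies `f(x) ≥ C·x·|f'(x)|` there. -/
theorem completely_monotone_doubling_deriv_bound
    (f : ℝ → ℝ) (x₀ C₁ : ℝ)
    (hf : IsCompletelyMonotone f)
    (hx₀ : 0 ≤ x₀) (hC₁ : 1 ≤ C₁)
    (hdbl : ∀ x : ℝ, x₀ < x → C₁⁻¹ * f x ≤ f (2 * x) ∧ f (2 * x) ≤ C₁ * f x) :
    ∃ C : ℝ, 0 < C ∧ ∀ x : ℝ, x₀ < x → C * (x * |deriv f x|) ≤ f x := by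
  obtain ⟨hs, hpos⟩ := hf
  have hf0 : ∀ x, 0 < x → 0 ≤ f x := fun x hx => by simpa using hpos 0 x hx
  have hf1 : ∀ x, 0 < x → deriv f x ≤ 0 := fun x hx => by
    have := hpos 1 x hx
    rw [iteratedDeriv_one] at this
    linarith
  have hf2 : ∀ x, 0 < x → 0 ≤ deriv (deriv f) x := fun x hx => by
    have := hpos 2 x hx
    rw [iteratedDeriv_succ, iteratedDeriv_one] at this
    linarith
  have hd : DifferentiableOn ℝ f (Ioi 0) := hs.differentiableOn (by simp)
  have hd1 : DifferentiableOn ℝ (deriv f) (Ioi 0) :=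
    (hs.deriv_of_isOpen (m := 1) isOpen_Ioi (by norm_cast)).differentiableOn (by simp)
  have hanti : AntitoneOn f (Ioi 0) := by
    apply antitoneOn_of_deriv_nonpos (convex_Ioi 0) hd.continuousOn
    · simpa using hd
    · intro x hx
      exact hf1 x (by simpa using hx)
  have hmono : MonotoneOn (deriv f) (Ioi 0) := by
    apply monotoneOn_of_deriv_nonneg (convex_Ioi 0) hd1.continuousOn
    · simpa using hd1
    · intro x hx
      exact hf2 x (by simpa using hx)
  have hC0 : 0 < C₁ := by linarith
  have hup : ∀ x, x₀ < x → f x ≤ C₁ * f (2 * x) := fun x hx => by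
    have := (hdbl x hx).1
    rwa [inv_mul_le_iff₀ hC0] at this
  -- the tail region
  have hfar : ∀ x, 2 * x₀ < x → (2 * C₁)⁻¹ * (x * |deriv f x|) ≤ f x := by
    intro x hx
    have hx0 : 0 < x := by linarith
    have h1 := hup (x / 2) (by linarith)
    rw [show 2 * (x / 2) = x by ring] at h1
    obtain ⟨c, hc, hcd⟩ := exists_deriv_eq_slope f (show x / 2 < x by linarith)
      (hd.continuousOn.mono fun y hy => by simp only [mem_Icc, mem_Ioi] at *; linarith)
      (hd.mono fun y hy => by simp only [mem_Ioo, mem_Ioi] at *; linarith)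
    have hm := hmono (show c ∈ Ioi 0 from lt_trans (by linarith) hc.1)
      (show x ∈ Ioi 0 from hx0) hc.2.le
    rw [hcd, div_le_iff₀ (by linarith)] at hm
    have h0 := hf0 x hx0
    rw [abs_of_nonpos (hf1 x hx0), inv_mul_le_iff₀ (by linarith)]
    nlinarith
  by_cases hz : f (2 * x₀) = 0 ∨ x₀ = 0
  · refine ⟨(2 * C₁)⁻¹, by positivity, fun x hx => ?_⟩
    rcases hx₀.eq_or_lt with h | h
    · exact hfar x (by linarith)
    · have hz : f (2 * x₀) = 0 := hz.resolve_right h.ne'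
      have hbig : ∀ y, x₀ < y → f y = 0 := by
        intro y hy
        have h1 := hanti (show 2 * x₀ ∈ Ioi 0 from by simp [h])
          (show 2 * y ∈ Ioi 0 from by simp only [mem_Ioi]; linarith) (by linarith)
        have h2 := hup y hy
        have h3 := hf0 y (by linarith)
        nlinarith
      have hev : f =ᶠ[nhds x] fun _ => 0 := by
        filter_upwards [Ioi_mem_nhds hx] with y hy using hbig y hy
      rw [hev.deriv_eq, hbig x hx]
      simp
  · push Not at hz
    obtain ⟨hz1, hz2⟩ := hz
    have hx0 : 0 < x₀ := lt_of_le_of_ne hx₀ (Ne.symm hz2)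
    have hfp : 0 < f (2 * x₀) := lt_of_le_of_ne (hf0 _ (by linarith)) (Ne.symm hz1)
    have hD : 0 < 2 * x₀ * |deriv f x₀| + 1 := by positivity
    refine ⟨min (2 * C₁)⁻¹ (f (2 * x₀) / (2 * x₀ * |deriv f x₀| + 1)),
      lt_min (by positivity) (by positivity), fun x hx => ?_⟩
    have hxp : 0 < x := by linarith
    have hnn : 0 ≤ x * |deriv f x| := by positivity
    rcases lt_or_ge (2 * x₀) x with h | h
    · exact (mul_le_mul_of_nonneg_right (min_le_left _ _) hnn).trans (hfar x h)
    · refine (mul_le_mul_of_nonneg_right (min_le_right _ _) hnn).trans ?_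
      have h1 : f (2 * x₀) ≤ f x := hanti hxp (show 0 < 2 * x₀ by linarith) h
      have h2 : |deriv f x| ≤ |deriv f x₀| := by
        rw [abs_of_nonpos (hf1 x hxp), abs_of_nonpos (hf1 x₀ hx0)]
        have := hmono (show x₀ ∈ Ioi 0 from hx0) (show x ∈ Ioi 0 from hxp) hx.le
        linarith
      have h3 : x * |deriv f x| ≤ 2 * x₀ * |deriv f x₀| := by gcongr
      refine le_trans ?_ h1
      rw [div_mul_eq_mul_div, div_le_iff₀ hD]
      exact mul_le_mul_of_nonneg_left (by linarith) hfp.le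
end
end

section
/- Let f be a completely monotone function. If −f' ∈ WLSC(τ, c, x₀) for some c ∈ (0,1], x₀ ≥ 0 and τ ≤ −1, then f ∈ WLSC(1+τ, c, x₀). Analogously, if −f' ∈ WUSC(τ, C, x₀) for some C ≥ 1, x₀ ≥ 0 and τ ≤ −1, then the function f − f(∞) belongs to WUSC(1+τ, C, x₀), where f(∞) = lim_{x→∞} f(x). -/
open Real Set Filter

noncomputable section

/-- Weak upper scaling property at infinity. -/
def WUSC (f : ℝ → ℝ) (θ C x₀ : ℝ) : Prop :=
  ∀ lam : ℝ, 1 ≤ lam → ∀ x : ℝ, x₀ < x → f (lam * x) ≤ C * lam ^ θ * f x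

/-- A function with nonpositive derivative on `(a,∞)` dominates its limit at infinity. -/
lemma limit_le_of_deriv_nonpos {h h' : ℝ → ℝ} {a M : ℝ}
    (hd : ∀ y, a < y → HasDerivAt h (h' y) y) (hn : ∀ y, a < y → h' y ≤ 0)
    (hM : Tendsto h atTop (nhds M)) {x : ℝ} (hx : a < x) : M ≤ h x := by
  have hanti : AntitoneOn h (Ioi a) := by
    apply antitoneOn_of_deriv_nonpos (convex_Ioi a)
    · exact fun y hy => (hd y hy).continuousAt.continuousWithinAt
    · rw [interior_Ioi]
      exact fun y hy => (hd y hy).differentiableAt.differentiableWithinAt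
    · rw [interior_Ioi]
      intro y hy
      rw [(hd y hy).deriv]
      exact hn y hy
  refine le_of_tendsto hM ?_
  filter_upwards [eventually_ge_atTop x] with y hy
  exact hanti hx (lt_of_lt_of_le hx hy) hy

/-- A completely monotone function has a nonnegative limit at infinity. -/
lemma exists_limit_of_cm {f : ℝ → ℝ} (hd : ∀ y, 0 < y → HasDerivAt f (deriv f y) y)
    (hn : ∀ y, 0 < y → deriv f y ≤ 0) (h0 : ∀ y, 0 < y → 0 ≤ f y) :
    ∃ L, 0 ≤ L ∧ Tendsto f atTop (nhds L) := by
  have hanti : AntitoneOn f (Ioi 0) := by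
    apply antitoneOn_of_deriv_nonpos (convex_Ioi 0)
    · exact fun y hy => (hd y hy).continuousAt.continuousWithinAt
    · rw [interior_Ioi]
      exact fun y hy => (hd y hy).differentiableAt.differentiableWithinAt
    · rw [interior_Ioi]
      exact fun y hy => hn y hy
  have hg : Antitone (fun y => f (max y 1)) := by
    intro u v huv
    exact hanti (by simp) (by simp) (max_le_max_right 1 huv)
  have hb : BddBelow (range (fun y => f (max y 1))) := by
    refine ⟨0, ?_⟩
    rintro _ ⟨y, rfl⟩
    exact h0 _ (by simp)
  have ht := tendsto_atTop_ciInf hg hb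
  refine ⟨_, ?_, ht.congr' ?_⟩
  · exact le_ciInf fun y => h0 _ (by simp)
  · filter_upwards [eventually_ge_atTop 1] with y hy
    simp [max_eq_left hy]

/-- For a completely monotone `f`: if `−f' ∈ WLSC(τ,c,x₀)` with
`τ ≤ −1` then `f ∈ WLSC(1+τ,c,x₀)`; if `−f' ∈ WUSC(τ,C,x₀)` with `τ ≤ −1` then
`f − f(∞) ∈ WUSC(1+τ,C,x₀)`, where `f(∞) = lim_{x→∞} f(x)`. -/
theorem completely_monotone_scaling_transfer
    (f : ℝ → ℝ) (x₀ : ℝ)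
    (hf : IsCompletelyMonotone f) (hx₀ : 0 ≤ x₀) :
    (∀ c τ : ℝ, 0 < c → c ≤ 1 → τ ≤ -1 →
      WLSC (fun x => -(deriv f x)) τ c x₀ → WLSC f (1 + τ) c x₀) ∧
    (∀ C τ : ℝ, 1 ≤ C → τ ≤ -1 →
      WUSC (fun x => -(deriv f x)) τ C x₀ →
      ∀ L : ℝ, Tendsto f atTop (nhds L) →
        WUSC (fun x => f x - L) (1 + τ) C x₀) := by
  have hd : ∀ y, 0 < y → HasDerivAt f (deriv f y) y := fun y hy =>
    ((hf.1.differentiableOn (by simp)).differentiableAt (Ioi_mem_nhds hy)).hasDerivAt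
  have hn : ∀ y, 0 < y → deriv f y ≤ 0 := by
    intro y hy
    have := hf.2 1 y hy
    simp only [pow_one, iteratedDeriv_one] at this
    linarith
  have h0 : ∀ y, 0 < y → 0 ≤ f y := by
    intro y hy
    simpa using hf.2 0 y hy
  have hdl : ∀ lam : ℝ, 1 ≤ lam → ∀ k y, x₀ < y →
      HasDerivAt (fun y => f (lam * y) - k * f y)
        (deriv f (lam * y) * lam - k * deriv f y) y := by
    intro lam hlam k y hy
    have hy0 : 0 < y := lt_of_le_of_lt hx₀ hy
    have h1 : HasDerivAt (fun y : ℝ => lam * y) lam y := by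
      simpa using (hasDerivAt_id y).const_mul lam
    exact ((hd (lam * y) (by positivity)).comp y h1).sub ((hd y hy0).const_mul k)
  have htl : ∀ lam : ℝ, 1 ≤ lam → ∀ k L, Tendsto f atTop (nhds L) →
      Tendsto (fun y => f (lam * y) - k * f y) atTop (nhds (L - k * L)) := by
    intro lam hlam k L hL
    exact (hL.comp (tendsto_id.const_mul_atTop (by positivity : 0 < lam))).sub (hL.const_mul k)
  have hpow : ∀ lam : ℝ, 1 ≤ lam → ∀ τ : ℝ, lam ^ (1 + τ) = lam * lam ^ τ := by
    intro lam hlam τ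
    rw [rpow_add (by positivity), rpow_one]
  constructor
  · intro c τ hc hc1 hτ hw lam hlam x hx
    obtain ⟨L, hL0, hL⟩ := exists_limit_of_cm hd hn h0
    have key := limit_le_of_deriv_nonpos (hdl lam hlam (c * lam ^ (1 + τ))) (fun y hy => by
      have h1 := mul_le_mul_of_nonneg_left (hw lam hlam y hy) (by positivity : 0 ≤ lam)
      rw [hpow lam hlam]
      simp only at h1
      linarith) (htl lam hlam _ L hL) hx
    have h2 : lam ^ (1 + τ) ≤ 1 := rpow_le_one_of_one_le_of_nonpos hlam (by linarith)
    have h3 : c * lam ^ (1 + τ) ≤ 1 := mul_le_one₀ hc1 (by positivity) h2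
    have h4 := mul_le_mul_of_nonneg_right h3 hL0
    linarith
  · intro C τ hC hτ hw L hL lam hlam x hx
    have key := limit_le_of_deriv_nonpos
      (fun y hy => (hdl lam hlam (C * lam ^ (1 + τ)) y hy).neg) (fun y hy => by
      have h1 := mul_le_mul_of_nonneg_left (hw lam hlam y hy) (by positivity : 0 ≤ lam)
      rw [hpow lam hlam]
      simp only at h1
      linarith) (htl lam hlam _ L hL).neg hx
    simp only [Pi.neg_apply] at key ⊢
    linarith
end
end

section
/- Let f be a completely monotone function and suppose f ∈ WLSC(α−1, c, x₀) ∩ WUSC(β−1, C, x₀) for some c ∈ (0,1], C ≥ 1, x₀ ≥ 0 and 0 < α ≤ β < 1. Then −f' ∈ WLSC(α−2, c', x₀) ∩ WUSC(β−2, C', x₀) for some c' ∈ (0,1] and C' ≥ 1. Consequently, if φ is a Bernstein function with φ(0) = 0 and φ ∈ WLSC(α, c, x₀) ∩ WUSC(β, C, x₀) with 0 < α ≤ β < 1, then −φ'' ∈ WLSC(α−2, c', x₀) ∩ WUSC(β−2, C', x₀) for some c' ∈ (0,1] and C' ≥ 1. -/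
open Real Set

noncomputable section

open Filter Topology

lemma aux_secant (F : ℝ → ℝ) (hd : ∀ x, 0 < x → DifferentiableAt ℝ F x)
    (hm : ∀ x y, 0 < x → x ≤ y → deriv F x ≤ deriv F y) (a b : ℝ) (ha : 0 < a) (hab : a < b) :
    deriv F a * (b - a) ≤ F b - F a ∧ F b - F a ≤ deriv F b * (b - a) := by
  obtain ⟨ξ, hξ, h⟩ := exists_deriv_eq_slope F hab
    (fun x hx => (hd x (lt_of_lt_of_le ha hx.1)).continuousAt.continuousWithinAt)
    (fun x hx => (hd x (lt_trans ha hx.1)).differentiableWithinAt)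
  have hba : 0 < b - a := by linarith
  have h' : F b - F a = deriv F ξ * (b - a) := by rw [h]; field_simp
  rw [h']
  constructor
  · exact mul_le_mul_of_nonneg_right (hm a ξ ha hξ.1.le) hba.le
  · exact mul_le_mul_of_nonneg_right (hm ξ b (lt_trans ha hξ.1) hξ.2.le) hba.le

lemma aux_cm (f : ℝ → ℝ) (h : IsCompletelyMonotone f) :
    (∀ x, 0 < x → 0 ≤ f x) ∧ (∀ x, 0 < x → DifferentiableAt ℝ f x) ∧
    (∀ x, 0 < x → deriv f x ≤ 0) ∧
    (∀ x y, 0 < x → x ≤ y → deriv f x ≤ deriv f y) := by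
  obtain ⟨hs, hn⟩ := h
  have hdd : DifferentiableOn ℝ (deriv f) (Ioi 0) := by
    have h1 : ContDiffOn ℝ 1 (deriv f) (Ioi 0) :=
      ((contDiffOn_infty_iff_deriv_of_isOpen isOpen_Ioi).1 hs).2.of_le (by exact_mod_cast le_top)
    exact h1.differentiableOn (by norm_num)
  refine ⟨fun x hx => by simpa using hn 0 x hx, fun x hx => ?_, fun x hx => ?_, ?_⟩
  · exact (hs.contDiffAt (Ioi_mem_nhds hx)).differentiableAt (by simp)
  · have := hn 1 x hx
    simp only [pow_one, iteratedDeriv_one] at this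
    linarith
  · have hmono : MonotoneOn (deriv f) (Ioi 0) := by
      apply monotoneOn_of_deriv_nonneg (convex_Ioi 0) hdd.continuousOn
      · rw [interior_Ioi]; exact hdd
      · intro x hx
        rw [interior_Ioi] at hx
        have := hn 2 x hx
        rw [iteratedDeriv_succ, iteratedDeriv_one] at this
        simpa using this
    intro x y hx hxy
    exact hmono hx (lt_of_lt_of_le hx hxy) hxy

lemma aux_part1 (α β c C x₀ : ℝ)
    (hβ : β < 1) (hβ0 : 0 < β)
    (hc : 0 < c) (hC : 0 < C) (hx₀ : 0 ≤ x₀) (f : ℝ → ℝ) (hf : IsCompletelyMonotone f)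
    (hL : WLSC f (α - 1) c x₀) (hU : WUSC f (β - 1) C x₀) :
      ∃ c' C' : ℝ, 0 < c' ∧ c' ≤ 1 ∧ 1 ≤ C' ∧
        WLSC (fun x => -(deriv f x)) (α - 2) c' x₀ ∧
        WUSC (fun x => -(deriv f x)) (β - 2) C' x₀ := by
  obtain ⟨h0, hd, hneg, hm⟩ := aux_cm f hf
  have sec := aux_secant f hd hm
  obtain ⟨g, hg⟩ : ∃ g : ℝ → ℝ, g = fun x => -(deriv f x) := ⟨_, rfl⟩
  have hgx : ∀ x, deriv f x = - g x := fun x => by simp [hg]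
  rw [← hg]
  simp only [hgx] at hneg hm sec
  have hg0 : ∀ x, 0 < x → 0 ≤ g x := fun x hx => by linarith [hneg x hx]
  -- f x ≤ K x g x
  obtain ⟨K, hK, hfK⟩ : ∃ K : ℝ, 0 < K ∧ ∀ x, x₀ < x → f x ≤ K * (x * g x) := by
    have ht : Tendsto (fun M : ℝ => C * M ^ (β - 1)) atTop (𝓝 (C * 0)) := by
      have := tendsto_rpow_neg_atTop (y := 1 - β) (by linarith)
      simp only [neg_sub] at this
      exact this.const_mul C
    rw [mul_zero] at ht
    obtain ⟨M, hM1, hM2⟩ := ((ht.eventually (ge_mem_nhds (show (0:ℝ) < 1/2 by norm_num))).and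
      (eventually_ge_atTop (2:ℝ))).exists
    refine ⟨2 * (M - 1), by linarith, fun x hx => ?_⟩
    have hx0 : 0 < x := by linarith
    have h1 := hU M (by linarith) x hx
    have h2 := (sec x (M * x) hx0 (by nlinarith)).1
    have h3 := mul_le_mul_of_nonneg_right hM1 (h0 x hx0)
    nlinarith
  obtain ⟨L, hLp, hfL⟩ : ∃ L : ℝ, 0 < L ∧ ∀ x, x₀ < x → x * g x ≤ L * f x := by
    have hp : 0 < c * (2:ℝ) ^ (α - 1) := by positivity
    have A : ∀ x, x₀ < x / 2 → x * g x ≤ 2 / (c * (2:ℝ) ^ (α - 1)) * f x := by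
      intro x hx
      have h1 := hL 2 (by norm_num) (x / 2) hx
      rw [show 2 * (x / 2) = x by ring] at h1
      have h2 := (sec (x / 2) x (by linarith) (by linarith)).2
      have h3 := h0 x (by linarith)
      have h4 : x * g x ≤ 2 * f (x / 2) := by nlinarith
      rw [div_mul_eq_mul_div, le_div_iff₀ hp]
      nlinarith
    rcases hx₀.eq_or_lt with h | hpos
    · exact ⟨_, by positivity, fun x hx => A x (by linarith)⟩
    rcases (h0 (2 * x₀) (by linarith)).eq_or_lt with hz | hfp
    · refine ⟨1, one_pos, fun x hx => ?_⟩
      have hanti : ∀ a b, 0 < a → a < b → f b ≤ f a := fun a b ha hab => by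
        have := (sec a b ha hab).2
        have := hg0 b (by linarith)
        nlinarith
      have hz' : ∀ y, x₀ < y → f y ≤ 0 := by
        intro y hy
        have hy0 : 0 < y := by linarith
        rcases le_or_gt y (2 * x₀) with h | h
        · have h1 := hL (2 * x₀ / y) ((one_le_div hy0).2 h) y hy
          rw [div_mul_cancel₀ _ hy0.ne', ← hz] at h1
          have h2 : 0 < c * (2 * x₀ / y) ^ (α - 1) := by positivity
          by_contra hcon
          push Not at hcon
          have := mul_pos h2 hcon
          linarith
        · rw [hz]; exact hanti _ _ (by linarith) h
      have h1 := (sec ((x + x₀) / 2) x (by linarith) (by linarith)).2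
      have h2 := hz' ((x + x₀) / 2) (by linarith)
      have h3 := h0 x (by linarith)
      have h4 : g x ≤ 0 := by
        by_contra hcon
        push Not at hcon
        have : 0 < g x * (x - (x + x₀) / 2) := mul_pos hcon (by linarith)
        linarith
      have : x * g x ≤ 0 := mul_nonpos_of_nonneg_of_nonpos (by linarith) h4
      linarith
    · have hq : 0 ≤ 2 * x₀ * g x₀ / f (2 * x₀) := by
        have := hg0 x₀ hpos
        positivity
      refine ⟨2 / (c * (2:ℝ) ^ (α - 1)) + 2 * x₀ * g x₀ / f (2 * x₀), by positivity, fun x hx => ?_⟩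
      have hfx := h0 x (by linarith)
      rcases lt_or_ge x₀ (x / 2) with h | h
      · have := A x h
        have := mul_nonneg hq hfx
        linarith
      · have h1 : x * g x ≤ 2 * x₀ * g x₀ := by
          have := hm x₀ x hpos hx.le
          exact mul_le_mul (by linarith) (by linarith) (hg0 x (by linarith)) (by linarith)
        have h2 : f (2 * x₀) ≤ f x := by
          rcases (show x ≤ 2 * x₀ by linarith).eq_or_lt with h | h
          · rw [h]
          · have := (sec x (2 * x₀) (by linarith) h).2
            have := hg0 (2 * x₀) (by linarith)
            nlinarith
        have h3 : 2 * x₀ * g x₀ ≤ 2 * x₀ * g x₀ / f (2 * x₀) * f x := by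
          calc 2 * x₀ * g x₀ = 2 * x₀ * g x₀ / f (2 * x₀) * f (2 * x₀) := by field_simp
            _ ≤ _ := mul_le_mul_of_nonneg_left h2 hq
        have h4 : 0 ≤ 2 / (c * (2:ℝ) ^ (α - 1)) * f x := by positivity
        linarith
  have hrp : ∀ l θ : ℝ, 0 < l → l ^ (θ - 1) = l * l ^ (θ - 2) := by
    intro l θ hl
    rw [show θ - 1 = 1 + (θ - 2) by ring, rpow_add hl, rpow_one]
  refine ⟨min 1 (c / (K * L)), 4 * (C * K + 1), by positivity, min_le_left _ _, ?_, ?_, ?_⟩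
  · have : 0 < C * K := by positivity
    linarith
  · intro l hl x hx
    have hx0 : 0 < x := by linarith
    have hl0 : 0 < l := by linarith
    have h1 := hL l hl x hx
    have h2 := hfK (l * x) (by nlinarith)
    have h3 := hfL x hx
    rw [hrp l α hl0] at h1
    have hP : 0 < l ^ (α - 2) := by positivity
    set P := l ^ (α - 2)
    have hgp := hg0 x hx0
    have h4 : min 1 (c / (K * L)) * P * g x ≤ c / (K * L) * P * g x := by
      gcongr
      exact min_le_right _ _
    refine h4.trans ?_
    rw [div_mul_eq_mul_div, div_mul_eq_mul_div, div_le_iff₀ (by positivity)]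
    have h5 : c * (l * P) * (x * g x) ≤ c * (l * P) * (L * f x) :=
      mul_le_mul_of_nonneg_left h3 (by positivity)
    have h6 : L * (c * (l * P) * f x) ≤ L * (K * (l * x * g (l * x))) :=
      mul_le_mul_of_nonneg_left (h1.trans h2) hLp.le
    have h7 : (l * x) * (c * P * g x) ≤ (l * x) * (g (l * x) * (K * L)) := by nlinarith
    exact le_of_mul_le_mul_left h7 (by positivity)
  · intro l hl x hx
    have hx0 : 0 < x := by linarith
    have hl0 : 0 < l := by linarith
    have hgp := hg0 x hx0
    have h2p : (2:ℝ) ^ (-2 : ℝ) = 1 / 4 := by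
      rw [rpow_neg (by norm_num)]; norm_num
    have h2b : 1 / 4 ≤ (2:ℝ) ^ (β - 2) := by
      rw [← h2p]
      exact rpow_le_rpow_of_exponent_le (by norm_num) (by linarith)
    have hCK : 0 < C * K := by positivity
    have hP : 0 < l ^ (β - 2) := by positivity
    rcases le_or_gt l 2 with h | h
    · have h1 : (2:ℝ) ^ (β - 2) ≤ l ^ (β - 2) :=
        rpow_le_rpow_of_nonpos hl0 h (by linarith)
      have h2 := hm x (l * x) hx0 (by nlinarith)
      have h3 : 1 ≤ 4 * (C * K + 1) * l ^ (β - 2) := by nlinarith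
      nlinarith
    · have h1 := (sec (l / 2 * x) (l * x) (by positivity) (by nlinarith)).2
      have h2 := hU (l / 2) (by linarith) x hx
      have h3 := hfK x hx
      have h4 := h0 (l * x) (by positivity)
      have h5 : (l / 2) ^ (β - 2) ≤ 4 * l ^ (β - 2) := by
        rw [div_rpow hl0.le (by norm_num), div_le_iff₀ (by positivity)]
        nlinarith
      rw [hrp (l / 2) β (by positivity)] at h2
      have hQ : 0 < (l / 2) ^ (β - 2) := by positivity
      set Q := (l / 2) ^ (β - 2)
      have h6 : C * (l / 2 * Q) * f x ≤ C * (l / 2 * Q) * (K * (x * g x)) :=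
        mul_le_mul_of_nonneg_left h3 (by positivity)
      have h7 : (l / 2 * x) * g (l * x) ≤ (l / 2 * x) * (C * K * Q * g x) := by nlinarith
      have h8 := le_of_mul_le_mul_left h7 (by positivity)
      refine h8.trans ?_
      have h9 : C * K * Q ≤ 4 * (C * K + 1) * l ^ (β - 2) := by nlinarith
      exact mul_le_mul_of_nonneg_right h9 hgp

lemma aux_part2 (α β c C x₀ : ℝ)
    (hα : 0 < α)
    (hc : 0 < c) (hC : 0 < C) (hx₀ : 0 ≤ x₀) (φ : ℝ → ℝ) (hφ : IsBernstein φ)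
    (hL : WLSC φ α c x₀) (hU : WUSC φ β C x₀) :
      ∃ c' C' : ℝ, 0 < c' ∧ 0 < C' ∧
        WLSC (deriv φ) (α - 1) c' x₀ ∧ WUSC (deriv φ) (β - 1) C' x₀ := by
  obtain ⟨h0, hs, hcm⟩ := hφ
  obtain ⟨hg0, hdd, hneg, -⟩ := aux_cm _ hcm
  have hd : ∀ x, 0 < x → DifferentiableAt ℝ φ x := fun x hx =>
    (hs.contDiffAt (Ioi_mem_nhds hx)).differentiableAt (by simp)
  have hm : ∀ x y, 0 < x → x ≤ y → deriv φ y ≤ deriv φ x := by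
    have hdo : DifferentiableOn ℝ (deriv φ) (Ioi 0) := fun x hx =>
      (hdd x hx).differentiableWithinAt
    have : AntitoneOn (deriv φ) (Ioi 0) := by
      apply antitoneOn_of_deriv_nonpos (convex_Ioi 0) hdo.continuousOn
      · rw [interior_Ioi]; exact hdo
      · intro x hx
        rw [interior_Ioi] at hx
        exact hneg x hx
    intro x y hx hxy
    exact this hx (lt_of_lt_of_le hx hxy) hxy
  have sec := aux_secant (fun x => - φ x) (fun x hx => (hd x hx).neg)
    (fun x y hx hxy => by simpa [deriv.fun_neg] using hm x y hx hxy)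
  simp only [deriv.fun_neg] at sec
  have hup : ∀ x, 0 < x → x * deriv φ x ≤ φ x := by
    intro x hx
    have key : ∀ e, 0 < e → e < x → (x - e) * deriv φ x ≤ φ x := by
      intro e he hex
      have := (sec e x he hex).2
      have := h0 e he
      nlinarith
    have ht : Tendsto (fun e : ℝ => (x - e) * deriv φ x) (𝓝[>] 0) (𝓝 ((x - 0) * deriv φ x)) := by
      apply Tendsto.mono_left _ nhdsWithin_le_nhds
      exact (Continuous.tendsto (by fun_prop) 0)
    rw [sub_zero] at ht
    refine le_of_tendsto ht ?_
    filter_upwards [Ioo_mem_nhdsGT hx] with e he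
    exact key e he.1 he.2
  obtain ⟨K, hK, hlow⟩ : ∃ K : ℝ, 0 < K ∧ ∀ x, x₀ < x → φ x ≤ K * (x * deriv φ x) := by
    have ht : Tendsto (fun M : ℝ => c * M ^ α) atTop atTop :=
      (tendsto_rpow_atTop hα).const_mul_atTop hc
    obtain ⟨M, hM1, hM2⟩ := ((ht.eventually_ge_atTop 2).and (eventually_ge_atTop (2:ℝ))).exists
    refine ⟨M - 1, by linarith, fun x hx => ?_⟩
    have hx0 : 0 < x := by linarith
    have h1 := hL M (by linarith) x hx
    have h2 := (sec x (M * x) hx0 (by nlinarith)).1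
    have h3 := mul_le_mul_of_nonneg_right hM1 (h0 x hx0)
    nlinarith
  have hrp : ∀ l θ : ℝ, 0 < l → l ^ θ = l * l ^ (θ - 1) := by
    intro l θ hl
    nth_rewrite 1 [show θ = 1 + (θ - 1) by ring]
    rw [rpow_add hl, rpow_one]
  refine ⟨c / K, C * K, by positivity, by positivity, ?_, ?_⟩
  · intro l hl x hx
    have hx0 : 0 < x := by linarith
    have hl0 : 0 < l := by linarith
    have h1 := hL l hl x hx
    have h2 := hlow (l * x) (by nlinarith)
    have h3 := hup x hx0
    rw [hrp l α hl0] at h1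
    have hP : 0 < l ^ (α - 1) := by positivity
    set P := l ^ (α - 1)
    rw [div_mul_eq_mul_div, div_mul_eq_mul_div, div_le_iff₀ hK]
    have h5 : c * (l * P) * (x * deriv φ x) ≤ c * (l * P) * φ x :=
      mul_le_mul_of_nonneg_left h3 (by positivity)
    have h7 : (l * x) * (c * P * deriv φ x) ≤ (l * x) * (deriv φ (l * x) * K) := by nlinarith
    exact le_of_mul_le_mul_left h7 (by positivity)
  · intro l hl x hx
    have hx0 : 0 < x := by linarith
    have hl0 : 0 < l := by linarith
    have h1 := hU l hl x hx
    have h2 := hup (l * x) (by positivity)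
    have h3 := hlow x hx
    rw [hrp l β hl0] at h1
    have hP : 0 < l ^ (β - 1) := by positivity
    set P := l ^ (β - 1)
    have h5 : C * (l * P) * φ x ≤ C * (l * P) * (K * (x * deriv φ x)) :=
      mul_le_mul_of_nonneg_left h3 (by positivity)
    have h7 : (l * x) * deriv φ (l * x) ≤ (l * x) * (C * K * P * deriv φ x) := by nlinarith
    exact le_of_mul_le_mul_left h7 (by positivity)

/-- If a completely monotone `f` satisfies
`f ∈ WLSC(α−1,c,x₀) ∩ WUSC(β−1,C,x₀)` with `0 < α ≤ β < 1`, then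
`−f' ∈ WLSC(α−2,c',x₀) ∩ WUSC(β−2,C',x₀)`; consequently, for a Bernstein function
`φ` with `φ(0) = 0` and `φ ∈ WLSC(α,c,x₀) ∩ WUSC(β,C,x₀)`, one has
`−φ'' ∈ WLSC(α−2,c',x₀) ∩ WUSC(β−2,C',x₀)`. -/
theorem scaling_of_neg_deriv_and_second_deriv
    (α β c C x₀ : ℝ)
    (hα : 0 < α) (hαβ : α ≤ β) (hβ : β < 1)
    (hc : 0 < c) (hc1 : c ≤ 1) (hC : 1 ≤ C) (hx₀ : 0 ≤ x₀) :
    (∀ f : ℝ → ℝ, IsCompletelyMonotone f →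
      WLSC f (α - 1) c x₀ → WUSC f (β - 1) C x₀ →
      ∃ c' C' : ℝ, 0 < c' ∧ c' ≤ 1 ∧ 1 ≤ C' ∧
        WLSC (fun x => -(deriv f x)) (α - 2) c' x₀ ∧
        WUSC (fun x => -(deriv f x)) (β - 2) C' x₀) ∧
    (∀ φ : ℝ → ℝ, IsBernstein φ → φ 0 = 0 →
      WLSC φ α c x₀ → WUSC φ β C x₀ →
      ∃ c' C' : ℝ, 0 < c' ∧ c' ≤ 1 ∧ 1 ≤ C' ∧
        WLSC (fun x => -(deriv (deriv φ) x)) (α - 2) c' x₀ ∧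
        WUSC (fun x => -(deriv (deriv φ) x)) (β - 2) C' x₀) := by
  refine ⟨fun f hf hL hU => ?_, fun φ hφ _ hL hU => ?_⟩
  · exact aux_part1 α β c C x₀ hβ (by linarith) hc (by linarith) hx₀ f hf hL hU
  · obtain ⟨c', C', hc', hC', hL', hU'⟩ :=
      aux_part2 α β c C x₀ hα hc (by linarith) hx₀ φ hφ hL hU
    exact aux_part1 α β c' C' x₀ hβ (by linarith) hc' hC' hx₀ _ hφ.2.2 hL' hU'
end
end
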